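/- For each n, endow the finite set of walks on the slit plane of length n with the uniform probability measure, and let (X_n, Y_n) ∈ ℤ² be the endpoint of the random walk. Then the pair (X_n/√n, Y_n/√n) converges in distribution, as n → ∞, to the probability measure on ℝ² with density f(x,y) = (√2/Γ(1/4)) · e^{−(x²+y²)} · √(x + √(x²+y²)) with respect to Lebesgue measure. -/

import Mathlib

open Filter

/-- The forbidden half-line `H = {(k,0) : k ≤ 0}`. -/
def slitH : Set (ℤ × ℤ) := {p : ℤ × ℤ | p.2 = 0 ∧ p.1 ≤ 0}

/-- The four steps of the ordinary square lattice. -/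
def sqSteps : Set (ℤ × ℤ) := {(1,0), (-1,0), (0,1), (0,-1)}

/-- The four diagonal steps. -/
def diagSteps : Set (ℤ × ℤ) := {(1,1), (1,-1), (-1,1), (-1,-1)}

/-- `w : Fin (n+1) → ℤ × ℤ` is a walk on the slit plane with steps in `A`. -/
def IsSlitWalk (A : Set (ℤ × ℤ)) (n : ℕ) (w : Fin (n+1) → ℤ × ℤ) : Prop :=
  w 0 = (0,0) ∧ (∀ m : Fin n, w m.succ - w m.castSucc ∈ A) ∧
    ∀ m : Fin (n+1), 1 ≤ (m : ℕ) → w m ∉ slitH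

/-- `a_{i,j}(n)`: the number of walks on the slit plane of length `n` ending at `(i,j)`. -/
noncomputable def slitCount (A : Set (ℤ × ℤ)) (i j : ℤ) (n : ℕ) : ℕ :=
  Nat.card {w : Fin (n+1) → ℤ × ℤ // IsSlitWalk A n w ∧ w (Fin.last n) = (i, j)}
/-- `a(n)`: the total number of walks on the slit plane of length `n`. -/
noncomputable def slitTotal (A : Set (ℤ × ℤ)) (n : ℕ) : ℕ :=
  Nat.card {w : Fin (n+1) → ℤ × ℤ // IsSlitWalk A n w}

/-- The density of the limit law of the rescaled endpoint of a uniformly random walk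
on the slit plane. -/
noncomputable def slitDensity (q : ℝ × ℝ) : ℝ :=
  Real.sqrt 2 / Real.Gamma (1/4) * Real.exp (-(q.1 ^ 2 + q.2 ^ 2))
    * Real.sqrt (q.1 + Real.sqrt (q.1 ^ 2 + q.2 ^ 2))



namespace SlitPf
open Set Topology

section
variable {E : Type*} [AddCommGroup E] [Module ℝ E]

/-- one-step averaging operator -/
noncomputable def T (f : ℤ × ℤ → E) (p : ℤ × ℤ) : E :=
  (1/4:ℝ) • (f (p + (1,0)) + f (p + (-1,0)) + f (p + (0,1)) + f (p + (0,-1)))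

open Classical in
/-- restriction of a function to a set -/
noncomputable def res (s : Set (ℤ × ℤ)) (f : ℤ × ℤ → E) (p : ℤ × ℤ) : E := if p ∈ s then f p else 0

/-- `L n f = E[f(S_n); T > n]`. -/
noncomputable def L : ℕ → (ℤ × ℤ → E) → E
  | 0, f => f (0,0)
  | (n+1), f => L n (T (res slitHᶜ f))

/-- `R n f = E[f(S_{n+1}); T = n+1]`. -/
noncomputable def R (n : ℕ) (f : ℤ × ℤ → E) : E := L n (T (res slitH f))

lemma T_add (f g : ℤ × ℤ → E) : T (f + g) = T f + T g := by
  ext p; simp only [T, Pi.add_apply, ← smul_add]; congr 1; abel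

lemma T_smul (c : ℝ) (f : ℤ × ℤ → E) : T (c • f) = c • T f := by
  ext p; simp only [T, Pi.smul_apply, ← smul_add]; rw [smul_comm]

lemma res_add (s : Set (ℤ × ℤ)) (f g : ℤ × ℤ → E) : res s (f + g) = res s f + res s g := by
  ext p; by_cases h : p ∈ s <;> simp [res, h]

lemma res_smul (s : Set (ℤ × ℤ)) (c : ℝ) (f : ℤ × ℤ → E) : res s (c • f) = c • res s f := by
  ext p; by_cases h : p ∈ s <;> simp [res, h]

lemma L_add (n : ℕ) : ∀ f g : ℤ × ℤ → E, L n (f + g) = L n f + L n g := by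
  induction n with
  | zero => intro f g; rfl
  | succ n ih => intro f g; simp only [L, res_add, T_add, ih]

lemma L_smul (n : ℕ) (c : ℝ) : ∀ f : ℤ × ℤ → E, L n (c • f) = c • L n f := by
  induction n with
  | zero => intro f; rfl
  | succ n ih => intro f; simp only [L, res_smul, T_smul, ih]

lemma L_split (n : ℕ) (f : ℤ × ℤ → E) : L n (T f) = L (n+1) f + R n f := by
  have : f = res slitHᶜ f + res slitH f := by
    ext p; by_cases h : p ∈ slitH <;> simp [res, h]
  conv_lhs => rw [this, T_add, L_add]
  rfl

lemma L_congr (n : ℕ) : ∀ f g : ℤ × ℤ → E, (∀ p, p ∉ slitH ∨ p = (0,0) → f p = g p) →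
    L n f = L n g := by
  induction n with
  | zero => intro f g h; exact h _ (Or.inr rfl)
  | succ n ih =>
    intro f g h
    have : res slitHᶜ f = res slitHᶜ g := by
      ext p; by_cases hp : p ∈ slitH
      · simp [res, hp]
      · simp [res, hp, h p (Or.inl hp)]
    simp only [L, this]

lemma R_congr (n : ℕ) (f g : ℤ × ℤ → E) (h : ∀ p, p ∈ slitH → f p = g p) :
    R n f = R n g := by
  have : res slitH f = res slitH g := by
    ext p; by_cases hp : p ∈ slitH
    · simp [res, hp, h p hp]
    · simp [res, hp]
  simp only [R, this]

end

lemma T_mul (c : ℂ) (f : ℤ × ℤ → ℂ) : T (fun p => c * f p) = fun p => c * T f p := by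
  ext p; simp only [T, Complex.real_smul]; ring

lemma res_mul (s : Set (ℤ × ℤ)) (c : ℂ) (f : ℤ × ℤ → ℂ) :
    res s (fun p => c * f p) = fun p => c * res s f p := by
  ext p; by_cases h : p ∈ s <;> simp [res, h]

lemma L_mul (n : ℕ) (c : ℂ) : ∀ f : ℤ × ℤ → ℂ, L n (fun p => c * f p) = c * L n f := by
  induction n with
  | zero => intro f; rfl
  | succ n ih => intro f; simp only [L, res_mul, T_mul, ih]

lemma L_add' (n : ℕ) (f g : ℤ × ℤ → ℂ) : L n (fun p => f p + g p) = L n f + L n g := L_add n f g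

lemma L_mono (n : ℕ) : ∀ f g : ℤ × ℤ → ℝ, (∀ p, f p ≤ g p) → L n f ≤ L n g := by
  induction n with
  | zero => intro f g h; exact h _
  | succ n ih =>
    intro f g h
    apply ih
    have : ∀ p, res slitHᶜ f p ≤ res slitHᶜ g p := by
      intro p; by_cases hp : p ∈ slitH <;> simp [res, hp, h p]
    intro p; simp only [T, smul_eq_mul]
    have h1 := this (p + (1,0)); have h2 := this (p + (-1,0))
    have h3 := this (p + (0,1)); have h4 := this (p + (0,-1))
    linarith

lemma T_norm (f : ℤ × ℤ → ℂ) (g : ℤ × ℤ → ℝ) (h : ∀ p, ‖f p‖ ≤ g p) (p : ℤ × ℤ) :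
    ‖T f p‖ ≤ T g p := by
  simp only [T, norm_smul, smul_eq_mul]
  have h1 := h (p + (1,0)); have h2 := h (p + (-1,0))
  have h3 := h (p + (0,1)); have h4 := h (p + (0,-1))
  rw [Real.norm_of_nonneg (by norm_num)]
  have := norm_add_le (f (p + (1,0)) + f (p + (-1,0)) + f (p + (0,1))) (f (p + (0,-1)))
  have := norm_add_le (f (p + (1,0)) + f (p + (-1,0))) (f (p + (0,1)))
  have := norm_add_le (f (p + (1,0))) (f (p + (-1,0)))
  linarith

lemma res_norm (s : Set (ℤ × ℤ)) (f : ℤ × ℤ → ℂ) (g : ℤ × ℤ → ℝ) (h : ∀ p, ‖f p‖ ≤ g p)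
    (p : ℤ × ℤ) : ‖res s f p‖ ≤ res s g p := by
  by_cases hp : p ∈ s <;> simp [res, hp, h p]

lemma L_norm (n : ℕ) : ∀ (f : ℤ × ℤ → ℂ) (g : ℤ × ℤ → ℝ), (∀ p, ‖f p‖ ≤ g p) →
    ‖L n f‖ ≤ L n g := by
  induction n with
  | zero => intro f g h; exact h _
  | succ n ih =>
    intro f g h
    exact ih _ _ (T_norm _ _ (res_norm _ _ _ h))

lemma R_norm (n : ℕ) (f : ℤ × ℤ → ℂ) (g : ℤ × ℤ → ℝ) (h : ∀ p, ‖f p‖ ≤ g p) :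
    ‖R n f‖ ≤ R n g := L_norm n _ _ (T_norm _ _ (res_norm _ _ _ h))

/-- survival probability -/
noncomputable def sv (n : ℕ) : ℝ := L n (fun _ => (1:ℝ))

lemma T_one : T (fun _ : ℤ × ℤ => (1:ℝ)) = fun _ => 1 := by
  ext p; simp [T]; norm_num

lemma R_one (n : ℕ) : R n (fun _ => (1:ℝ)) = sv n - sv (n+1) := by
  have := L_split n (fun _ => (1:ℝ))
  rw [T_one] at this
  simp only [sv]; linarith

lemma R_one_nonneg (n : ℕ) : 0 ≤ R n (fun _ => (1:ℝ)) := by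
  have := R_norm n (fun _ => 0) (fun _ => 1) (by simp)
  exact (norm_nonneg _).trans this

lemma sv_succ_le (n : ℕ) : sv (n+1) ≤ sv n := by
  have := R_one_nonneg n; rw [R_one] at this; linarith

lemma sv_anti : Antitone sv := antitone_nat_of_succ_le sv_succ_le

lemma sv_zero : sv 0 = 1 := rfl

lemma sv_nonneg (n : ℕ) : 0 ≤ sv n := by
  have := L_norm n (fun _ => 0) (fun _ => 1) (by simp)
  exact (norm_nonneg _).trans this

lemma sv_le_one (n : ℕ) : sv n ≤ 1 := sv_anti (Nat.zero_le n)

lemma L_norm_le (n : ℕ) (f : ℤ × ℤ → ℂ) (h : ∀ p, ‖f p‖ ≤ 1) : ‖L n f‖ ≤ sv n :=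
  L_norm n f (fun _ => 1) h

lemma R_norm_le (n : ℕ) (f : ℤ × ℤ → ℂ) (h : ∀ p, ‖f p‖ ≤ 1) : ‖R n f‖ ≤ sv n - sv (n+1) := by
  rw [← R_one]; exact R_norm n f (fun _ => 1) h

lemma T_differentiable (f : ℂ → ℤ × ℤ → ℂ) (h : ∀ p, Differentiable ℂ (fun z => f z p))
    (p : ℤ × ℤ) : Differentiable ℂ (fun z => T (f z) p) := by
  simp only [T, Complex.real_smul]
  exact (((h _).add (h _)).add (h _) |>.add (h _)).const_mul _

lemma res_differentiable (s : Set (ℤ × ℤ)) (f : ℂ → ℤ × ℤ → ℂ)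
    (h : ∀ p, Differentiable ℂ (fun z => f z p))
    (p : ℤ × ℤ) : Differentiable ℂ (fun z => res s (f z) p) := by
  by_cases hp : p ∈ s
  · simpa [res, hp] using h p
  · simp [res, hp]

lemma L_differentiable (n : ℕ) : ∀ (f : ℂ → ℤ × ℤ → ℂ),
    (∀ p, Differentiable ℂ (fun z => f z p)) → Differentiable ℂ (fun z => L n (f z)) := by
  induction n with
  | zero => intro f h; exact h _
  | succ n ih => intro f h; exact ih _ (T_differentiable _ (res_differentiable _ _ h))

lemma R_differentiable (n : ℕ) (f : ℂ → ℤ × ℤ → ℂ)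
    (h : ∀ p, Differentiable ℂ (fun z => f z p)) : Differentiable ℂ (fun z => R n (f z)) :=
  L_differentiable n _ (T_differentiable _ (res_differentiable _ _ h))

/-! ### link with walks -/

lemma step_cases (s : ℤ × ℤ) : s ∈ sqSteps ↔ s = (1,0) ∨ s = (-1,0) ∨ s = (0,1) ∨ s = (0,-1) := by
  simp [sqSteps]

/-- the steps, as a finset -/
def stepsF : Finset (ℤ × ℤ) := {(1,0), (-1,0), (0,1), (0,-1)}

lemma mem_stepsF (s : ℤ × ℤ) : s ∈ stepsF ↔ s ∈ sqSteps := by simp [stepsF, sqSteps]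

lemma T_eq_sum (f : ℤ × ℤ → ℝ) (p : ℤ × ℤ) : T f p = (1/4) * ∑ s ∈ stepsF, f (p + s) := by
  simp only [T, stepsF, smul_eq_mul]
  rw [Finset.sum_insert (by decide), Finset.sum_insert (by decide), Finset.sum_insert (by decide),
    Finset.sum_singleton]
  ring

lemma walk_snoc (n : ℕ) (w : Fin (n+1) → ℤ × ℤ) (p : ℤ × ℤ) :
    IsSlitWalk sqSteps (n+1) (Fin.snoc w p : Fin (n+2) → ℤ × ℤ) ↔
      IsSlitWalk sqSteps n w ∧ p - w (Fin.last n) ∈ sqSteps ∧ p ∉ slitH := by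
  unfold IsSlitWalk
  have h0 : (Fin.snoc w p : Fin (n+2) → ℤ × ℤ) 0 = w 0 := by
    simp
  rw [h0, Fin.forall_fin_succ' (n := n), Fin.forall_fin_succ' (n := n+1)]
  have e1 : ∀ m : Fin n, (Fin.snoc w p : Fin (n+2) → ℤ × ℤ) (m.castSucc.succ) = w m.succ := by
    intro m
    rw [← Fin.castSucc_succ]
    exact Fin.snoc_castSucc (α := fun _ => ℤ × ℤ) p w m.succ
  have e2 : ∀ m : Fin (n+1), (Fin.snoc w p : Fin (n+2) → ℤ × ℤ) m.castSucc = w m := by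
    intro m
    exact Fin.snoc_castSucc (α := fun _ => ℤ × ℤ) p w m
  have e3 : (Fin.snoc w p : Fin (n+2) → ℤ × ℤ) (Fin.last (n+1)) = p :=
    Fin.snoc_last (α := fun _ => ℤ × ℤ) p w
  simp only [e1, e2, Fin.succ_last, e3, Fin.val_castSucc, Fin.val_last]
  constructor
  · rintro ⟨a, ⟨b, c⟩, d, e⟩
    exact ⟨⟨a, b, d⟩, c, e (by omega)⟩
  · rintro ⟨⟨a, b, d⟩, c, e⟩
    exact ⟨a, ⟨b, c⟩, d, fun _ => e⟩

/-- the finset of walks -/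
noncomputable def Wk : (n : ℕ) → Finset (Fin (n+1) → ℤ × ℤ)
  | 0 => {fun _ => (0,0)}
  | (n+1) => by
    classical
    exact ((Wk n ×ˢ stepsF).filter (fun q => q.1 (Fin.last n) + q.2 ∉ slitH)).image
      (fun q => (Fin.snoc q.1 (q.1 (Fin.last n) + q.2) : Fin (n+2) → ℤ × ℤ))

lemma mem_Wk (n : ℕ) : ∀ w, w ∈ Wk n ↔ IsSlitWalk sqSteps n w := by
  induction n with
  | zero =>
    intro w
    simp only [Wk, Finset.mem_singleton, IsSlitWalk]
    constructor
    · rintro rfl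
      refine ⟨rfl, fun m => m.elim0, ?_⟩
      intro m hm; have := m.2; omega
    · rintro ⟨h, -, -⟩
      ext1 m
      rw [Fin.fin_one_eq_zero m, h]
  | succ n ih =>
    intro w
    simp only [Wk, Finset.mem_image, Finset.mem_filter, Finset.mem_product, mem_stepsF, ih]
    constructor
    · rintro ⟨⟨v, s⟩, ⟨⟨hv, hs⟩, hn⟩, rfl⟩
      rw [walk_snoc]
      exact ⟨hv, by simpa using hs, hn⟩
    · intro hw
      have e : w = (Fin.snoc (Fin.init w) (w (Fin.last (n+1))) : Fin (n+2) → ℤ × ℤ) :=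
        (Fin.snoc_init_self (α := fun _ => ℤ × ℤ) w).symm
      rw [e, walk_snoc] at hw
      refine ⟨⟨Fin.init w, w (Fin.last (n+1)) - Fin.init w (Fin.last n)⟩,
        ⟨⟨hw.1, hw.2.1⟩, by simpa using hw.2.2⟩, ?_⟩
      simp only [add_sub_cancel]
      exact e.symm

lemma sum_Wk (n : ℕ) : ∀ f : ℤ × ℤ → ℝ, ∑ w ∈ Wk n, f (w (Fin.last n)) = 4^n * L n f := by
  induction n with
  | zero => intro f; simp [Wk, L]
  | succ n ih =>
    intro f
    classical
    simp only [Wk, L]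
    rw [Finset.sum_image]
    · simp only [Fin.snoc_last]
      rw [Finset.sum_filter, Finset.sum_product]
      have : ∀ w : Fin (n+1) → ℤ × ℤ, (∑ s ∈ stepsF, if w (Fin.last n) + s ∉ slitH then
          f (w (Fin.last n) + s) else 0) = 4 * T (res slitHᶜ f) (w (Fin.last n)) := by
        intro w
        rw [T_eq_sum]
        rw [← mul_assoc]; norm_num
        refine Finset.sum_congr rfl fun s _ => ?_
        by_cases h : w (Fin.last n) + s ∈ slitH <;> simp [h, res]
      have h2 := ih (fun p => T (res slitHᶜ f) p)
      calc _ = ∑ w ∈ Wk n, 4 * T (res slitHᶜ f) (w (Fin.last n)) := by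
            
            apply Finset.sum_congr rfl; intro w _; rw [← this]
        _ = 4 * (4 ^ n * L n (fun p => T (res slitHᶜ f) p)) := by rw [← Finset.mul_sum, h2]
        _ = _ := by rw [pow_succ]; ring
    · rintro ⟨v, s⟩ - ⟨v', s'⟩ - h
      have h1 := congrArg (Fin.init (α := fun _ => ℤ × ℤ)) h
      have h2 := congrFun h (Fin.last (n+1))
      simp only [Fin.init_snoc] at h1
      simp only [Fin.snoc_last] at h2
      subst h1
      simpa using h2

lemma slitTotal_eq (n : ℕ) : (slitTotal sqSteps n : ℝ) = 4^n * sv n := by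
  have h := sum_Wk n (fun _ => 1)
  simp only [Finset.sum_const, nsmul_eq_mul, mul_one] at h
  rw [sv, ← h]
  unfold slitTotal
  simp_rw [← mem_Wk]
  simp

lemma slitCount_eq (n : ℕ) (p : ℤ × ℤ) : (slitCount sqSteps p.1 p.2 n : ℝ) =
    ∑ w ∈ Wk n, if w (Fin.last n) = p then 1 else 0 := by
  unfold slitCount
  simp_rw [← mem_Wk]
  rw [Finset.sum_boole, Nat.subtype_card]
  simp

lemma tsum_slitCount (n : ℕ) (f : ℤ × ℤ → ℝ) :
    ∑' p : ℤ × ℤ, (slitCount sqSteps p.1 p.2 n : ℝ) * f p = 4^n * L n f := by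
  rw [← sum_Wk]
  simp_rw [slitCount_eq, Finset.sum_mul]
  rw [Summable.tsum_finsetSum]
  · apply Finset.sum_congr rfl
    intro w _
    rw [tsum_eq_single (w (Fin.last n))]
    · simp
    · intro p hp; simp [hp.symm]
  · intro w _
    apply summable_of_ne_finset_zero (s := {w (Fin.last n)})
    intro p hp
    simp at hp
    simp [Ne.symm hp]

end SlitPf


namespace SlitPf
open Set Topology

lemma L_conj (n : ℕ) : ∀ f : ℤ × ℤ → ℂ,
    (starRingEnd ℂ) (L n f) = L n (fun p => (starRingEnd ℂ) (f p)) := by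
  have hT : ∀ f : ℤ × ℤ → ℂ, (fun p => (starRingEnd ℂ) (T f p)) =
      T (fun p => (starRingEnd ℂ) (f p)) := by
    intro f; ext p; simp only [T, Complex.real_smul, map_mul, map_add, Complex.conj_ofReal]
  have hr : ∀ f : ℤ × ℤ → ℂ, (fun p => (starRingEnd ℂ) (res slitHᶜ f p)) =
      res slitHᶜ (fun p => (starRingEnd ℂ) (f p)) := by
    intro f; ext p; by_cases h : p ∈ slitH <;> simp [res, h]
  induction n with
  | zero => intro f; rfl
  | succ n ih => intro f; simp only [L, ih, hT, hr]

/-- character -/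
noncomputable def ch (a b : ℝ) (p : ℤ × ℤ) : ℂ := Complex.exp (Complex.I * (a * p.1 + b * p.2))

/-- symbol of the walk -/
noncomputable def cc (a b : ℝ) : ℝ := (Real.cos a + Real.cos b) / 2

lemma ch_norm (a b : ℝ) (p : ℤ × ℤ) : ‖ch a b p‖ = 1 := by
  have : ch a b p = Complex.exp (((a * p.1 + b * p.2 : ℝ) : ℂ) * Complex.I) := by
    simp [ch, mul_comm]
  rw [this, Complex.norm_exp_ofReal_mul_I]

lemma two_cos (a : ℝ) : (2 * Real.cos a : ℂ) =
    Complex.exp (Complex.I * a) + Complex.exp (- (Complex.I * a)) := by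
  rw [Complex.ofReal_cos, Complex.two_cos, mul_comm Complex.I, neg_mul]

lemma T_ch (a b : ℝ) : T (ch a b) = fun p => (cc a b : ℂ) * ch a b p := by
  ext p
  have h1 : ch a b (p + (1,0)) = Complex.exp (Complex.I * a) * ch a b p := by
    simp only [ch, ← Complex.exp_add]; congr 1; push_cast [Prod.fst_add, Prod.snd_add]; ring
  have h2 : ch a b (p + (-1,0)) = Complex.exp (- (Complex.I * a)) * ch a b p := by
    simp only [ch, ← Complex.exp_add]; congr 1; push_cast [Prod.fst_add, Prod.snd_add]; ring
  have h3 : ch a b (p + (0,1)) = Complex.exp (Complex.I * b) * ch a b p := by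
    simp only [ch, ← Complex.exp_add]; congr 1; push_cast [Prod.fst_add, Prod.snd_add]; ring
  have h4 : ch a b (p + (0,-1)) = Complex.exp (- (Complex.I * b)) * ch a b p := by
    simp only [ch, ← Complex.exp_add]; congr 1; push_cast [Prod.fst_add, Prod.snd_add]; ring
  have e1 := two_cos a
  have e2 := two_cos b
  simp only [T, h1, h2, h3, h4, Complex.real_smul, cc]
  push_cast at e1 e2 ⊢
  linear_combination (-(1/4) * ch a b p) * e1 + (-(1/4) * ch a b p) * e2

lemma phi_succ (n : ℕ) (a b : ℝ) :
    L (n+1) (ch a b) = cc a b * L n (ch a b) - R n (ch a b) := by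
  have := L_split n (ch a b)
  rw [T_ch, L_mul] at this
  rw [this]; ring

lemma summ_L {t : ℝ} (h0 : 0 ≤ t) (h1 : t < 1) (f : ℤ × ℤ → ℂ) (hf : ∀ p, ‖f p‖ ≤ 1) :
    Summable (fun n => (t:ℂ)^n * L n f) := by
  apply Summable.of_norm_bounded (summable_geometric_of_lt_one h0 h1)
  intro n
  rw [norm_mul, norm_pow, Complex.norm_real, Real.norm_of_nonneg h0]
  have := (L_norm_le n f hf).trans (sv_le_one n)
  exact mul_le_of_le_one_right (by positivity) this

lemma R_le_one (n : ℕ) (f : ℤ × ℤ → ℂ) (hf : ∀ p, ‖f p‖ ≤ 1) : ‖R n f‖ ≤ 1 := by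
  have := R_norm_le n f hf
  have := sv_le_one n
  have := sv_nonneg (n+1)
  linarith

lemma summ_R {t : ℝ} (h0 : 0 ≤ t) (h1 : t < 1) (f : ℤ × ℤ → ℂ) (hf : ∀ p, ‖f p‖ ≤ 1) :
    Summable (fun n => (t:ℂ)^(n+1) * R n f) := by
  apply Summable.of_norm_bounded (summable_geometric_of_lt_one h0 h1)
  intro n
  rw [norm_mul, norm_pow, Complex.norm_real, Real.norm_of_nonneg h0]
  have := R_le_one n f hf
  calc t^(n+1) * ‖R n f‖ ≤ t^(n+1) * 1 := by gcongr
    _ ≤ t^n := by rw [mul_one, pow_succ]; exact mul_le_of_le_one_right (by positivity) h1.le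

lemma T_le_one (f : ℤ × ℤ → ℂ) (hf : ∀ p, ‖f p‖ ≤ 1) (p : ℤ × ℤ) : ‖T f p‖ ≤ 1 := by
  have := T_norm f (fun _ => 1) hf p
  rwa [T_one] at this

lemma gen_general {t : ℝ} (h0 : 0 ≤ t) (h1 : t < 1) (f : ℤ × ℤ → ℂ) (hf : ∀ p, ‖f p‖ ≤ 1) :
    ∑' n, (t:ℂ)^n * L n f = f (0,0) + t * (∑' n, (t:ℂ)^n * L n (T f))
      - ∑' n, (t:ℂ)^(n+1) * R n f := by
  rw [(summ_L h0 h1 f hf).tsum_eq_zero_add, ← tsum_mul_left, add_sub_assoc,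
    ← ((summ_L h0 h1 (T f) (T_le_one f hf)).mul_left (t:ℂ)).tsum_sub (summ_R h0 h1 f hf)]
  congr 1
  · simp [L]
  · congr 1; ext n
    rw [L_split, pow_succ]; ring

/-- the boundary generating function -/
noncomputable def Bf (t : ℝ) (z : ℂ) : ℂ :=
  1 - ∑' n, (t:ℂ)^(n+1) * R n (fun p => z ^ ((-p.1).toNat))

lemma R_ch (n : ℕ) (a b : ℝ) :
    R n (ch a b) = R n (fun p => Complex.exp (-(Complex.I * a)) ^ ((-p.1).toNat)) := by
  apply R_congr
  rintro ⟨i, j⟩ ⟨hj, hi⟩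
  simp only at hj hi
  obtain ⟨k, rfl⟩ : ∃ k : ℕ, i = -k := ⟨(-i).toNat, by omega⟩
  subst hj
  simp only [ch, neg_neg, Int.toNat_natCast, ← Complex.exp_nat_mul]
  congr 1; push_cast; ring

lemma gen_ch {t : ℝ} (h0 : 0 ≤ t) (h1 : t < 1) (a b : ℝ) :
    (1 - t * cc a b) * ∑' n, (t:ℂ)^n * L n (ch a b) = Bf t (Complex.exp (-(Complex.I * a))) := by
  have := gen_general h0 h1 (ch a b) (fun p => (ch_norm a b p).le)
  simp only [R_ch] at this
  rw [T_ch] at this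
  simp only [L_mul] at this
  have e : ∑' n, (t:ℂ)^n * (cc a b * L n (ch a b)) = cc a b * ∑' n, (t:ℂ)^n * L n (ch a b) := by
    rw [← tsum_mul_left]; congr 1; ext n; ring
  rw [e] at this
  have e0 : ch a b (0,0) = 1 := by simp [ch]
  rw [e0] at this
  unfold Bf
  linear_combination this

/-- row function -/
noncomputable def rw_ (a : ℝ) (j : ℤ) (p : ℤ × ℤ) : ℂ :=
  if p.2 = j then Complex.exp (Complex.I * (a * p.1)) else 0

lemma rw_norm (a : ℝ) (j : ℤ) (p : ℤ × ℤ) : ‖rw_ a j p‖ ≤ 1 := by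
  have : Complex.exp (Complex.I * (a * p.1)) = ch a 0 p := by simp [ch]
  unfold rw_
  split_ifs
  · rw [this, ch_norm]
  · simp

lemma T_rw (a : ℝ) (j : ℤ) : T (rw_ a j) = fun p => (Real.cos a / 2 : ℂ) * rw_ a j p +
    (1/4) * (rw_ a (j-1) p + rw_ a (j+1) p) := by
  ext p
  have h1 : rw_ a j (p + (1,0)) = Complex.exp (Complex.I * a) * rw_ a j p := by
    simp only [rw_, Prod.snd_add, add_zero, Prod.fst_add]
    split_ifs
    · rw [← Complex.exp_add]; congr 1; push_cast; ring
    · simp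
  have h2 : rw_ a j (p + (-1,0)) = Complex.exp (-(Complex.I * a)) * rw_ a j p := by
    simp only [rw_, Prod.snd_add, add_zero, Prod.fst_add]
    split_ifs
    · rw [← Complex.exp_add]; congr 1; push_cast; ring
    · simp
  have h3 : rw_ a j (p + (0,1)) = rw_ a (j-1) p := by
    simp only [rw_, Prod.snd_add, add_zero, Prod.fst_add, eq_sub_iff_add_eq]
  have h4 : rw_ a j (p + (0,-1)) = rw_ a (j+1) p := by
    simp only [rw_, Prod.snd_add, add_zero, Prod.fst_add, ← sub_eq_add_neg, sub_eq_iff_eq_add]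
  have e1 := two_cos a
  simp only [T, h1, h2, h3, h4, Complex.real_smul]
  push_cast at e1 ⊢
  linear_combination (-(1/4) * rw_ a j p) * e1

/-- row generating function -/
noncomputable def G (t a : ℝ) (j : ℤ) : ℂ := ∑' n, (t:ℂ)^n * L n (rw_ a j)

lemma G_bound {t : ℝ} (h0 : 0 ≤ t) (h1 : t < 1) (a : ℝ) (j : ℤ) : ‖G t a j‖ ≤ (1 - t)⁻¹ := by
  unfold G
  rw [← tsum_geometric_of_lt_one h0 h1]
  apply tsum_of_norm_bounded (summable_geometric_of_lt_one h0 h1).hasSum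
  intro n
  rw [norm_mul, norm_pow, Complex.norm_real, Real.norm_of_nonneg h0]
  have := (L_norm_le n (rw_ a j) (rw_norm a j)).trans (sv_le_one n)
  exact mul_le_of_le_one_right (by positivity) this

lemma R_rw (n : ℕ) (a : ℝ) (j : ℤ) : R n (rw_ a j) =
    if j = 0 then R n (fun p => Complex.exp (-(Complex.I * a)) ^ ((-p.1).toNat)) else 0 := by
  split_ifs with hj
  · rw [← R_ch n a 0]
    apply R_congr
    rintro ⟨i, k⟩ ⟨hk, hi⟩
    simp only at hk hi
    simp [rw_, ch, hj, hk]
  · have : R n (rw_ a j) = R n (fun _ => (0:ℝ) • (0:ℂ)) := by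
      apply R_congr
      rintro ⟨i, k⟩ ⟨hk, hi⟩
      simp only at hk hi
      simp only [rw_, hk, Ne.symm hj, if_false, smul_zero]
    rw [this]
    have := R_norm n (fun _ => (0:ℝ) • (0:ℂ)) (fun _ => 0) (by simp)
    have h2 : R n (fun _ : ℤ × ℤ => (0:ℝ)) = 0 := by
      have e : res slitH (fun _ : ℤ × ℤ => (0:ℝ)) = (0:ℝ) • (fun _ => (0:ℝ)) := by
        ext p; simp [res]
      rw [R, e, T_smul, L_smul, zero_smul]
    rw [h2] at this
    exact norm_le_zero_iff.mp this

lemma G_rec {t : ℝ} (h0 : 0 ≤ t) (h1 : t < 1) (a : ℝ) (j : ℤ) :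
    (1 - t * Real.cos a / 2) * G t a j - t / 4 * (G t a (j-1) + G t a (j+1)) =
      if j = 0 then Bf t (Complex.exp (-(Complex.I * a))) else 0 := by
  have := gen_general h0 h1 (rw_ a j) (rw_norm a j)
  rw [T_rw] at this
  have s := fun j => summ_L h0 h1 (rw_ a j) (rw_norm a j)
  have e : ∑' n, (t:ℂ)^n * L n (fun p => (Real.cos a / 2 : ℂ) * rw_ a j p +
    (1/4) * (rw_ a (j-1) p + rw_ a (j+1) p)) = Real.cos a / 2 * G t a j +
      (1/4) * (G t a (j-1) + G t a (j+1)) := by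
    unfold G
    rw [← (s (j-1)).tsum_add (s (j+1)), ← tsum_mul_left, ← tsum_mul_left,
      ← ((s j).mul_left _).tsum_add (((s (j-1)).add (s (j+1))).mul_left _)]
    congr 1; ext n
    rw [L_add', L_mul, L_mul, L_add']; ring
  rw [e] at this
  change G t a j = _ at this
  simp only [R_rw] at this
  have e0 : rw_ a j (0,0) = if j = 0 then 1 else 0 := by
    simp [rw_, eq_comm]
  rw [e0] at this
  unfold Bf
  split_ifs with hj
  · simp only [hj, if_true] at this ⊢
    linear_combination this
  · simp only [hj, if_false] at this ⊢
    simp only [mul_zero, tsum_zero] at this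
    linear_combination this

lemma bdd_rec (g : ℕ → ℂ) (M q : ℝ) (hM : ∀ n, ‖g n‖ ≤ M) (hq0 : 0 < q) (hq1 : q < 1)
    (h : ∀ n, q * (g n + g (n+2)) = (q^2 + 1) * g (n+1)) : g 1 = q * g 0 := by
  have hE : ∀ n, (q:ℂ)^n * (g (n+1) - q * g n) = g 1 - q * g 0 := by
    intro n
    induction n with
    | zero => simp
    | succ n ih =>
      rw [← ih, pow_succ]
      linear_combination (q:ℂ)^n * h n
  have hlim : Filter.Tendsto (fun n => (q:ℂ)^n * (g (n+1) - q * g n)) Filter.atTop (𝓝 0) := by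
    rw [tendsto_zero_iff_norm_tendsto_zero]
    have h2 : Filter.Tendsto (fun n : ℕ => q^n * (M + q * M)) Filter.atTop (𝓝 0) := by
      simpa using (tendsto_pow_atTop_nhds_zero_of_lt_one hq0.le hq1).mul_const (M + q*M)
    refine squeeze_zero (fun _ => norm_nonneg _) (fun n => ?_) h2
    rw [norm_mul, norm_pow, Complex.norm_real, Real.norm_of_nonneg hq0.le]
    gcongr
    refine (norm_sub_le _ _).trans ?_
    rw [norm_mul, Complex.norm_real, Real.norm_of_nonneg hq0.le]
    gcongr <;> apply hM
  simp only [hE] at hlim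
  have := tendsto_nhds_unique hlim tendsto_const_nhds
  linear_combination -this

lemma G_zero {t : ℝ} (h0 : 0 < t) (h1 : t < 1) (a : ℝ) :
    (Real.sqrt ((1 - t * Real.cos a / 2)^2 - t^2/4) : ℂ) * G t a 0 =
      Bf t (Complex.exp (-(Complex.I * a))) := by
  set m := 1 - t * Real.cos a / 2 with hm
  have hc := Real.cos_le_one a
  have hm1 : t / 2 < m := by rw [hm]; nlinarith
  set r := Real.sqrt (m^2 - t^2/4) with hr
  have hpos : 0 < m^2 - t^2/4 := by nlinarith
  have hr2 : r^2 = m^2 - t^2/4 := Real.sq_sqrt hpos.le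
  have hr0 : 0 < r := Real.sqrt_pos.mpr hpos
  set q := (m - r) / (t/2) with hq
  have hrm : r < m := by nlinarith
  have hq0 : 0 < q := div_pos (by linarith) (by linarith)
  have hq1 : q < 1 := by
    rw [hq, div_lt_one (by linarith)]
    nlinarith
  have hqt : t * q / 2 = m - r := by rw [hq]; field_simp
  have hqq : t / 4 * (q^2 + 1) = m * q := by
    rw [hq]; field_simp; nlinarith
  have hG := G_rec h0.le h1 a
  have hmC : (1 - t * Real.cos a / 2 : ℂ) = (m : ℂ) := by rw [hm]; push_cast; ring
  simp only [hmC] at hG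
  have hqqC : (t:ℂ) / 4 * (q^2 + 1) = m * q := by exact_mod_cast hqq
  have ht : (t:ℂ)/4 ≠ 0 := by
    have : (t:ℂ) ≠ 0 := by exact_mod_cast h0.ne'
    simpa using this
  have p1 := bdd_rec (fun n => G t a n) _ q (fun n => G_bound h0.le h1 a n) hq0 hq1 (by
    intro n
    have := hG (n+1)
    rw [if_neg (by omega), add_sub_cancel_right, add_assoc] at this
    push_cast
    norm_num at this
    apply mul_left_cancel₀ ht
    linear_combination (-(q:ℂ)) * this - G t a (n+1) * hqqC)
  have p2 := bdd_rec (fun n => G t a (-n)) _ q (fun n => G_bound h0.le h1 a _) hq0 hq1 (by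
    intro n
    have := hG (-(n+1))
    rw [if_neg (by omega)] at this
    have e1 : -((n:ℤ)+1) - 1 = -(n+2) := by ring
    have e2 : -((n:ℤ)+1) + 1 = -n := by ring
    rw [e1, e2] at this
    push_cast
    apply mul_left_cancel₀ ht
    linear_combination (-(q:ℂ)) * this - G t a (-(n+1)) * hqqC)
  have h00 := hG 0
  simp only [if_true] at h00
  simp at p1 p2
  rw [zero_sub, zero_add, p1, p2] at h00
  have hqtC : (t:ℂ) * q / 2 = m - r := by exact_mod_cast hqt
  rw [← h00]
  linear_combination G t a 0 * hqtC

/-- generating function along the axis -/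
noncomputable def Af (t : ℝ) (z : ℂ) : ℂ :=
  ∑' n, (t:ℂ)^n * L n (fun p => if p.2 = 0 then z ^ (p.1.toNat) else 0)

lemma G_eq_Af (t a : ℝ) : G t a 0 = Af t (Complex.exp (Complex.I * a)) := by
  unfold G Af
  congr 1; ext n; congr 1
  apply L_congr
  rintro ⟨i, j⟩ h
  simp only [rw_]
  split_ifs with hj
  · obtain ⟨k, rfl⟩ : ∃ k : ℕ, i = k := by
      refine ⟨i.toNat, ?_⟩
      rcases h with h | h
      · simp [slitH, hj] at h; omega
      · simp at h; omega
    simp only [Int.toNat_natCast, ← Complex.exp_nat_mul]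
    congr 1; push_cast; ring
  · rfl

end SlitPf


namespace SlitPf
open Set Topology

lemma Af_diff {t : ℝ} (h0 : 0 ≤ t) (h1 : t < 1) : DiffContOnCl ℂ (Af t) (Metric.ball 0 1) := by
  have hb : ∀ (n : ℕ) (z : ℂ), z ∈ Metric.closedBall (0:ℂ) 1 →
      ‖(t:ℂ)^n * L n (fun p => if p.2 = 0 then z ^ (p.1.toNat) else 0)‖ ≤ t^n := by
    intro n z hz
    rw [norm_mul, norm_pow, Complex.norm_real, Real.norm_of_nonneg h0]
    have := (L_norm_le n (fun p => if p.2 = 0 then z ^ (p.1.toNat) else 0) (by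
      intro p; split_ifs
      · rw [norm_pow]; exact pow_le_one₀ (norm_nonneg _) (by simpa using hz)
      · simp)).trans (sv_le_one n)
    exact mul_le_of_le_one_right (by positivity) this
  have hd : ∀ n : ℕ, Differentiable ℂ (fun z : ℂ =>
      (t:ℂ)^n * L n (fun p : ℤ × ℤ => if p.2 = 0 then z ^ (p.1.toNat) else 0)) := by
    intro n
    apply Differentiable.const_mul
    apply L_differentiable
    intro p; split_ifs
    · fun_prop
    · fun_prop
  constructor
  · exact Complex.differentiableOn_tsum_of_summable_norm (summable_geometric_of_lt_one h0 h1)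
      (fun n => (hd n).differentiableOn) Metric.isOpen_ball
      (fun n z hz => hb n z (Metric.ball_subset_closedBall hz))
  · rw [closure_ball _ one_ne_zero]
    exact continuousOn_tsum (fun n => (hd n).continuous.continuousOn)
      (summable_geometric_of_lt_one h0 h1) hb

lemma Bf_diff {t : ℝ} (h0 : 0 ≤ t) (h1 : t < 1) : DiffContOnCl ℂ (Bf t) (Metric.ball 0 1) := by
  have hb : ∀ (n : ℕ) (z : ℂ), z ∈ Metric.closedBall (0:ℂ) 1 →
      ‖(t:ℂ)^(n+1) * R n (fun p => z ^ ((-p.1).toNat))‖ ≤ t^n := by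
    intro n z hz
    rw [norm_mul, norm_pow, Complex.norm_real, Real.norm_of_nonneg h0]
    have := (R_le_one n (fun p => z ^ ((-p.1).toNat)) (by
      intro p
      rw [norm_pow]; exact pow_le_one₀ (norm_nonneg _) (by simpa using hz)))
    calc t^(n+1) * _ ≤ t^(n+1) * 1 := by gcongr
    _ ≤ t^n := by rw [mul_one, pow_succ]; exact mul_le_of_le_one_right (by positivity) h1.le
  have hd : ∀ n : ℕ, Differentiable ℂ (fun z : ℂ =>
      (t:ℂ)^(n+1) * R n (fun p : ℤ × ℤ => z ^ ((-p.1).toNat))) := by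
    intro n
    apply Differentiable.const_mul
    apply R_differentiable
    intro p; fun_prop
  unfold Bf
  apply DiffContOnCl.const_sub
  constructor
  · exact Complex.differentiableOn_tsum_of_summable_norm (summable_geometric_of_lt_one h0 h1)
      (fun n => (hd n).differentiableOn) Metric.isOpen_ball
      (fun n z hz => hb n z (Metric.ball_subset_closedBall hz))
  · rw [closure_ball _ one_ne_zero]
    exact continuousOn_tsum (fun n => (hd n).continuous.continuousOn)
      (summable_geometric_of_lt_one h0 h1) hb

lemma Af_zero (t : ℝ) : Af t 0 = 1 := by
  unfold Af
  rw [tsum_eq_single 0]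
  · simp [L]
  · intro n hn
    obtain ⟨k, rfl⟩ := Nat.exists_eq_succ_of_ne_zero hn
    have e : res slitHᶜ (fun p : ℤ × ℤ => if p.2 = 0 then (0:ℂ) ^ (p.1.toNat) else 0)
        = (0:ℝ) • (fun _ => (0:ℂ)) := by
      ext ⟨i, j⟩
      by_cases h : (i,j) ∈ slitH
      · simp [res, h]
      · simp only [res, mem_compl_iff, h, not_false_eq_true, if_true, smul_zero, Pi.smul_apply]
        split_ifs with hj
        · simp [slitH, hj] at h
          simp; omega
        · rfl
    simp only [Nat.succ_eq_add_one, L]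
    rw [e, T_smul, L_smul, zero_smul, mul_zero]

lemma Af_conj (t : ℝ) (z : ℂ) : (starRingEnd ℂ) (Af t z) = Af t ((starRingEnd ℂ) z) := by
  unfold Af
  rw [Complex.conj_tsum]
  congr 1; ext n
  rw [map_mul, L_conj, map_pow, Complex.conj_ofReal]
  congr 2
  ext p; split_ifs <;> simp

/-- half of the Wiener-Hopf factor -/
noncomputable def wf (C D : ℝ) (z : ℂ) : ℂ := (1 - C * z) ^ (1/2:ℂ) * (1 - D * z) ^ (1/2:ℂ)

lemma slit_mem {C : ℝ} (hC0 : 0 ≤ C) (hC1 : C < 1) {z : ℂ} (hz : ‖z‖ ≤ 1) :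
    0 < (1 - C * z).re := by
  have : z.re ≤ 1 := (Complex.re_le_norm z).trans hz
  simp only [Complex.sub_re, Complex.one_re, Complex.re_ofReal_mul]
  nlinarith

lemma cpow_half_conj {w : ℂ} (h : 0 < w.re) :
    (starRingEnd ℂ) w ^ (1/2:ℂ) = (starRingEnd ℂ) (w ^ (1/2:ℂ)) := by
  have h1 : w.arg ≠ Real.pi := by
    have := Complex.abs_arg_lt_pi_div_two_iff.mpr (Or.inl h)
    intro h2
    rw [h2, abs_of_pos Real.pi_pos] at this
    linarith [Real.pi_pos]
  rw [Complex.conj_cpow _ _ h1, map_div₀, map_one, map_ofNat]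

lemma cpow_half_sq (w : ℂ) : w ^ (1/2:ℂ) * w ^ (1/2:ℂ) = w := by
  have := Complex.cpow_nat_inv_pow w (n := 2) two_ne_zero
  rw [sq] at this
  simpa using this

lemma cpow_half_mul_conj {w : ℂ} (_h : 0 < w.re) :
    w ^ (1/2:ℂ) * (starRingEnd ℂ) (w ^ (1/2:ℂ)) = (‖w‖ : ℂ) := by
  rw [Complex.mul_conj']
  have : ‖w ^ (1/2:ℂ)‖ ^ 2 = ‖w‖ := by
    rw [← norm_pow, sq, cpow_half_sq]
  exact_mod_cast this

lemma wf_conj {C D : ℝ} (hC0 : 0 ≤ C) (hC1 : C < 1) (hD0 : 0 ≤ D) (hD1 : D < 1) {z : ℂ}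
    (hz : ‖z‖ ≤ 1) : wf C D ((starRingEnd ℂ) z) = (starRingEnd ℂ) (wf C D z) := by
  unfold wf
  rw [map_mul, ← cpow_half_conj (slit_mem hC0 hC1 hz), ← cpow_half_conj (slit_mem hD0 hD1 hz)]
  simp

lemma wf_ne {C D : ℝ} (hC0 : 0 ≤ C) (hC1 : C < 1) (hD0 : 0 ≤ D) (hD1 : D < 1) {z : ℂ}
    (hz : ‖z‖ ≤ 1) : wf C D z ≠ 0 := by
  have h1 := slit_mem hC0 hC1 hz
  have h2 := slit_mem hD0 hD1 hz
  have : ∀ w : ℂ, 0 < w.re → w ^ (1/2:ℂ) ≠ 0 := by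
    intro w hw h
    have := cpow_half_sq w
    rw [h, mul_zero] at this
    rw [← this] at hw; simp at hw
  exact mul_ne_zero (this _ h1) (this _ h2)

lemma wf_diffAt {C D : ℝ} (hC0 : 0 ≤ C) (hC1 : C < 1) (hD0 : 0 ≤ D) (hD1 : D < 1) {z : ℂ}
    (hz : ‖z‖ ≤ 1) : DifferentiableAt ℂ (wf C D) z := by
  unfold wf
  apply DifferentiableAt.mul
  · apply DifferentiableAt.cpow_const (by fun_prop)
    exact Or.inl (slit_mem hC0 hC1 hz)
  · apply DifferentiableAt.cpow_const (by fun_prop)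
    exact Or.inl (slit_mem hD0 hD1 hz)

lemma diffCont_of_at (f : ℂ → ℂ) (h : ∀ z : ℂ, ‖z‖ ≤ 1 → DifferentiableAt ℂ f z) :
    DiffContOnCl ℂ f (Metric.ball 0 1) := by
  apply DifferentiableOn.diffContOnCl
  rw [closure_ball _ one_ne_zero]
  intro z hz
  exact (h z (by simpa using hz)).differentiableWithinAt

/-- Wiener-Hopf uniqueness -/
lemma wh_unique (P Q : ℂ → ℂ) (hP : DiffContOnCl ℂ P (Metric.ball 0 1))
    (hQ : DiffContOnCl ℂ Q (Metric.ball 0 1)) (hP0 : P 0 = 1)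
    (h : ∀ z : ℂ, ‖z‖ = 1 → Q z = (starRingEnd ℂ) (P z)) (a : ℝ) :
    Q (Complex.exp (Complex.I * a)) = 1 := by
  have hF : DiffContOnCl ℂ (fun z => (P z - 1) * (Q z - 1)) (Metric.ball 0 1) :=
    (hP.sub_const 1).smul (hQ.sub_const 1)
  have hav := DiffContOnCl.circleAverage (R := 1) (c := 0) (f := fun z => (P z - 1) * (Q z - 1))
    (by rw [abs_one]; exact hF)
  simp only [hP0, sub_self, zero_mul] at hav
  have hcm : ∀ θ : ℝ, ‖circleMap 0 1 θ‖ = 1 := by intro θ; simp [norm_circleMap_zero]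
  have heq : ∀ θ : ℝ, (P (circleMap 0 1 θ) - 1) * (Q (circleMap 0 1 θ) - 1) =
      ((‖P (circleMap 0 1 θ) - 1‖^2 : ℝ) : ℂ) := by
    intro θ
    rw [h _ (hcm θ)]
    have : (starRingEnd ℂ) (P (circleMap 0 1 θ)) - 1 =
      (starRingEnd ℂ) (P (circleMap 0 1 θ) - 1) := by simp
    rw [this, Complex.mul_conj']; push_cast; rfl
  rw [Real.circleAverage] at hav
  simp only [heq] at hav
  rw [intervalIntegral.integral_ofReal] at hav
  have hav2 : ∫ θ in (0:ℝ)..(2*Real.pi), ‖P (circleMap 0 1 θ) - 1‖^2 = 0 := by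
    have hpi := Real.pi_ne_zero
    simpa [hpi] using hav
  have hper : Function.Periodic (fun θ => ‖P (circleMap 0 1 θ) - 1‖^2) (2*Real.pi) := by
    intro θ; simp only [periodic_circleMap 0 1 θ]
  have hav3 := hper.intervalIntegral_add_eq a 0
  rw [zero_add, hav2] at hav3
  have hcont : Continuous (fun θ => ‖P (circleMap 0 1 θ) - 1‖^2) := by
    have : Continuous (fun θ => P (circleMap 0 1 θ)) := by
      have h1 := hP.continuousOn
      rw [closure_ball _ one_ne_zero] at h1
      exact h1.comp_continuous (continuous_circleMap 0 1) (fun θ => by simp [hcm θ])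
    exact (this.sub continuous_const).norm.pow 2
  have hz : circleMap 0 1 a = Complex.exp (Complex.I * a) := by simp [circleMap, mul_comm]
  have hn : ‖Complex.exp (Complex.I * a)‖ = 1 := by rw [← hz]; exact hcm a
  have hPa : P (Complex.exp (Complex.I * a)) = 1 := by
    by_contra hne
    have hlt : a < a + 2 * Real.pi := by linarith [Real.pi_pos]
    have := intervalIntegral.integral_pos hlt hcont.continuousOn (fun _ _ => by positivity)
      ⟨a, ⟨le_refl _, hlt.le⟩, by
        rw [hz]
        have : 0 < ‖P (Complex.exp (Complex.I * a)) - 1‖ := norm_pos_iff.mpr (sub_ne_zero.mpr hne)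
        positivity⟩
    linarith
  rw [h _ hn, hPa, map_one]

lemma norm_sq_one_sub (C a : ℝ) : ‖1 - C * Complex.exp (Complex.I * a)‖^2 =
    1 + C^2 - 2 * C * Real.cos a := by
  rw [← Complex.normSq_eq_norm_sq, Complex.normSq_apply]
  have h1 : (Complex.exp (Complex.I * a)).re = Real.cos a := by
    rw [mul_comm, Complex.exp_ofReal_mul_I_re]
  have h2 : (Complex.exp (Complex.I * a)).im = Real.sin a := by
    rw [mul_comm, Complex.exp_ofReal_mul_I_im]
  simp only [Complex.sub_re, Complex.one_re, Complex.re_ofReal_mul, Complex.sub_im, Complex.one_im,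
    Complex.im_ofReal_mul, h1, h2]
  nlinarith [Real.sin_sq_add_cos_sq a]

theorem Bf_eq {t : ℝ} (h0 : 0 < t) (h1 : t < 1) (a : ℝ) :
    Bf t (Complex.exp (-(Complex.I * a))) =
      (((1 + √(1-t)) * (1 + √(1+t)) / 4 : ℝ) : ℂ) *
        wf ((1 - √(1-t))/(1 + √(1-t))) ((√(1+t) - 1)/(√(1+t) + 1))
          (Complex.exp (-(Complex.I * a))) := by
  set d := √(1-t) with hd
  set e := √(1+t) with he
  have hd2 : d^2 = 1 - t := Real.sq_sqrt (by linarith)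
  have he2 : e^2 = 1 + t := Real.sq_sqrt (by linarith)
  have hd0 : 0 < d := Real.sqrt_pos.mpr (by linarith)
  have he0 : 0 < e := Real.sqrt_pos.mpr (by linarith)
  have hd1 : d < 1 := by nlinarith
  have he1 : 1 < e := by nlinarith
  set C := (1 - d)/(1 + d) with hC
  set D := (e - 1)/(e + 1) with hD
  have hC0 : 0 ≤ C := div_nonneg (by linarith) (by linarith)
  have hD0 : 0 ≤ D := div_nonneg (by linarith) (by linarith)
  have hC1 : C < 1 := by rw [hC, div_lt_one (by linarith)]; linarith
  have hD1 : D < 1 := by rw [hD, div_lt_one (by linarith)]; linarith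
  set κ : ℝ := (1 + d) * (1 + e) / 4 with hκ
  have hκ0 : 0 < κ := by positivity
  have hκC : (κ:ℂ) ≠ 0 := by exact_mod_cast hκ0.ne'
  have fact : ∀ a : ℝ, √((1 - t * Real.cos a / 2)^2 - t^2/4) =
      κ * (‖1 - C * Complex.exp (Complex.I * a)‖ * ‖1 - D * Complex.exp (Complex.I * a)‖) := by
    intro a
    have f1 : (1 + d)^2 / 4 * (1 + C^2 - 2 * C * Real.cos a) =
        1 - t * Real.cos a / 2 - t / 2 := by
      have : 1 + d ≠ 0 := by positivity
      rw [hC]; field_simp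
      linear_combination (4 + 4 * Real.cos a) * hd2
    have f2 : (1 + e)^2 / 4 * (1 + D^2 - 2 * D * Real.cos a) =
        1 - t * Real.cos a / 2 + t / 2 := by
      have : e + 1 ≠ 0 := by positivity
      rw [hD, add_comm 1 e]; field_simp
      linear_combination (4 - 4 * Real.cos a) * he2
    rw [← Real.sqrt_sq (show 0 ≤ κ * (‖1 - C * Complex.exp (Complex.I * a)‖ *
      ‖1 - D * Complex.exp (Complex.I * a)‖) by positivity), mul_pow, mul_pow, norm_sq_one_sub,
      norm_sq_one_sub]
    congr 1
    have : (1 - t * Real.cos a / 2)^2 - t^2/4 = (1 - t * Real.cos a / 2 - t / 2) *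
      (1 - t * Real.cos a / 2 + t / 2) := by ring
    rw [this, ← f1, ← f2, hκ]; ring
  have key : ∀ a : ℝ, Af t (Complex.exp (Complex.I * a)) * (κ * (wf C D (Complex.exp (Complex.I * a))
      * (starRingEnd ℂ) (wf C D (Complex.exp (Complex.I * a))))) =
      Bf t (Complex.exp (-(Complex.I * a))) := by
    intro a
    have hn : ‖Complex.exp (Complex.I * a)‖ ≤ 1 := by
      rw [mul_comm, Complex.norm_exp_ofReal_mul_I]
    rw [← G_zero h0 h1, G_eq_Af, fact, mul_comm]
    congr 1
    have e1 := cpow_half_mul_conj (slit_mem hC0 hC1 hn)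
    have e2 := cpow_half_mul_conj (slit_mem hD0 hD1 hn)
    push_cast
    rw [← e1, ← e2]
    simp only [wf, map_mul]
    ring
  have hw0 : wf C D 0 = 1 := by simp [wf]
  have main := wh_unique (fun z => Af t z * wf C D z) (fun z => Bf t z * ((κ:ℂ) * wf C D z)⁻¹)
    ((Af_diff h0.le h1).smul (diffCont_of_at _ (fun z hz => wf_diffAt hC0 hC1 hD0 hD1 hz)))
    ((Bf_diff h0.le h1).smul (diffCont_of_at _ (fun z hz =>
      ((wf_diffAt hC0 hC1 hD0 hD1 hz).const_mul _).inv
        (mul_ne_zero hκC (wf_ne hC0 hC1 hD0 hD1 hz)))))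
    (by simp [Af_zero, hw0])
    (by
      intro z hz
      obtain ⟨b, hb⟩ : ∃ b : ℝ, z = Complex.exp (-(Complex.I * b)) := by
        refine ⟨-z.arg, ?_⟩
        have := Complex.norm_mul_exp_arg_mul_I z
        rw [hz] at this
        push_cast
        rw [mul_neg, neg_neg, mul_comm]
        simpa using this.symm
      have hzc : (starRingEnd ℂ) z = Complex.exp (Complex.I * b) := by
        rw [hb, ← Complex.exp_conj]; simp
      have hk := key b
      rw [← hb, ← hzc] at hk
      have hwn : wf C D z ≠ 0 := wf_ne hC0 hC1 hD0 hD1 hz.le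
      rw [map_mul, Af_conj, ← hk, wf_conj hC0 hC1 hD0 hD1 hz.le, Complex.conj_conj]
      field_simp)
    (-a)
  have ea : Complex.I * ((-a : ℝ):ℂ) = -(Complex.I * a) := by push_cast; ring
  rw [ea] at main
  have hn : ‖Complex.exp (-(Complex.I * a))‖ ≤ 1 := by
    rw [← ea, mul_comm, Complex.norm_exp_ofReal_mul_I]
  have hwn : wf C D (Complex.exp (-(Complex.I * a))) ≠ 0 := wf_ne hC0 hC1 hD0 hD1 hn
  rwa [← div_eq_mul_inv, div_eq_one_iff_eq (mul_ne_zero hκC hwn)] at main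

end SlitPf


namespace SlitPf
open Set Topology Filter

lemma x_tend : Tendsto (fun N : ℕ => 1 / √(N:ℝ)) atTop (𝓝[≠] 0) := by
  rw [tendsto_nhdsWithin_iff]
  constructor
  · have : Tendsto (fun N : ℕ => √(N:ℝ)) atTop atTop :=
      Real.tendsto_sqrt_atTop.comp tendsto_natCast_atTop_atTop
    simp only [one_div]
    exact this.inv_tendsto_atTop
  · filter_upwards [eventually_gt_atTop 0] with N hN
    have : 0 < √(N:ℝ) := Real.sqrt_pos.mpr (by exact_mod_cast hN)
    simp [this.ne']

lemma y_tend : Tendsto (fun N : ℕ => 1 / (N:ℝ)) atTop (𝓝[≠] 0) := by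
  rw [tendsto_nhdsWithin_iff]
  constructor
  · simp only [one_div]
    exact (tendsto_natCast_atTop_atTop (R := ℝ)).inv_tendsto_atTop
  · filter_upwards [eventually_gt_atTop 0] with N hN
    simp; omega

lemma lim_exp (l : ℝ) : Tendsto (fun N : ℕ => (N:ℝ) * (1 - Real.exp (-l / N))) atTop (𝓝 l) := by
  have hd : HasDerivAt (fun x : ℝ => 1 - Real.exp (-l * x)) l 0 := by
    have := ((((hasDerivAt_id (0:ℝ)).const_mul (-l)).exp).const_sub 1)
    simpa using this
  have := hd.tendsto_slope_zero.comp y_tend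
  refine this.congr (fun N => ?_)
  simp [div_eq_mul_inv]

lemma lim_cos (a : ℝ) : Tendsto (fun N : ℕ => (N:ℝ) * (1 - Real.cos (a / √N))) atTop
    (𝓝 (a^2/2)) := by
  have hd : HasDerivAt (fun x : ℝ => Real.sin (a / 2 * x)) (a/2) 0 := by
    have := (((hasDerivAt_id (0:ℝ)).const_mul (a/2)).sin)
    simpa using this
  have := ((hd.tendsto_slope_zero.comp x_tend).pow 2).const_mul 2
  have e : 2 * (a/2)^2 = a^2/2 := by ring
  rw [e] at this
  refine this.congr (fun N => ?_)
  have h1 : Real.cos (a / √N) = 1 - 2 * Real.sin (a/2 * (1/√N))^2 := by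
    have : a / √N = 2 * (a/2 * (1/√N)) := by ring
    rw [this, Real.cos_two_mul, Real.cos_sq']; ring
  rw [h1]
  simp [mul_pow]
  ring

lemma lim_cexp (a : ℝ) : Tendsto (fun N : ℕ => ((√(N:ℝ) : ℝ) : ℂ) *
    (1 - Complex.exp (-(Complex.I * ((a / √N : ℝ) : ℂ))))) atTop (𝓝 (Complex.I * a)) := by
  have hd : HasDerivAt (fun x : ℝ => 1 - Complex.exp (-(Complex.I * a) * x)) (Complex.I * a) 0 := by
    have h1 : HasDerivAt (fun x : ℂ => 1 - Complex.exp (-(Complex.I * a) * x))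
        (Complex.I * a) ((0:ℝ):ℂ) := by
      have := ((((hasDerivAt_id ((0:ℝ):ℂ)).const_mul (-(Complex.I * a))).cexp).const_sub 1)
      simpa using this
    exact h1.comp_ofReal
  have := hd.tendsto_slope_zero.comp x_tend
  refine this.congr (fun N => ?_)
  simp [div_eq_mul_inv, mul_assoc]

/-- the parameter `t` -/
noncomputable def tN (l : ℝ) (N : ℕ) : ℝ := Real.exp (-l / N)

lemma tN_lim (l : ℝ) : Tendsto (tN l) atTop (𝓝 1) := by
  unfold tN
  have : Tendsto (fun N : ℕ => -l / (N:ℝ)) atTop (𝓝 0) := tendsto_const_div_atTop_nhds_zero_nat _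
  have h := (Real.continuous_exp.tendsto 0).comp this
  rw [Real.exp_zero] at h
  exact h

lemma den_lim (l a b : ℝ) : Tendsto (fun N : ℕ => (N:ℝ) * (1 - tN l N * cc (a/√N) (b/√N))) atTop
    (𝓝 (l + (a^2+b^2)/4)) := by
  have h := (lim_exp l).add ((tN_lim l).mul ((((lim_cos a).add (lim_cos b)).div_const 2)))
  have e : l + 1 * ((a^2/2 + b^2/2)/2) = l + (a^2+b^2)/4 := by ring
  rw [e] at h
  refine h.congr (fun N => ?_)
  simp only [tN, cc]; ring

lemma d_lim (l : ℝ) : Tendsto (fun N : ℕ => √(N:ℝ) * √(1 - tN l N)) atTop (𝓝 √l) := by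
  have := (Real.continuous_sqrt.tendsto l).comp (lim_exp l)
  refine this.congr (fun N => ?_)
  simp only [Function.comp, tN]
  rw [Real.sqrt_mul (Nat.cast_nonneg N)]

lemma d_lim0 (l : ℝ) : Tendsto (fun N : ℕ => √(1 - tN l N)) atTop (𝓝 0) := by
  have := (Real.continuous_sqrt.tendsto _).comp ((tN_lim l).const_sub 1)
  rw [sub_self, Real.sqrt_zero] at this
  exact this

/-- constant -/
noncomputable def D0 : ℝ := (√2 - 1)/(√2 + 1)

/-- constant -/
noncomputable def c0 : ℝ := (1 + √2)/4 * √(1 - D0)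

lemma D0_lt : D0 < 1 := by
  unfold D0
  rw [div_lt_one (by positivity)]; linarith

lemma c0_pos : 0 < c0 := by
  have := D0_lt
  have : 0 < √(1 - D0) := Real.sqrt_pos.mpr (by linarith)
  unfold c0; positivity

lemma z_lim (a : ℝ) : Tendsto (fun N : ℕ => Complex.exp (-(Complex.I * ((a / √N : ℝ) : ℂ)))) atTop
    (𝓝 1) := by
  have h1 : Tendsto (fun N : ℕ => a / √(N:ℝ)) atTop (𝓝 0) := by
    have := (tendsto_nhdsWithin_iff.mp x_tend).1.const_mul a
    simpa [div_eq_mul_inv] using this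
  have h2 : Continuous (fun y : ℝ => Complex.exp (-(Complex.I * (y:ℂ)))) := by fun_prop
  have h := (h2.tendsto 0).comp h1
  simp only [Complex.ofReal_zero, mul_zero, neg_zero, Complex.exp_zero] at h
  exact h

lemma tN_mem {l : ℝ} (hl : 0 < l) : ∀ᶠ N : ℕ in atTop, 0 < tN l N ∧ tN l N < 1 := by
  filter_upwards [eventually_gt_atTop 0] with N hN
  refine ⟨Real.exp_pos _, ?_⟩
  unfold tN
  rw [Real.exp_lt_one_iff]
  have : (0:ℝ) < N := by exact_mod_cast hN
  rw [neg_div]; simp; positivity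

lemma real_mul_cpow {r : ℝ} (hr : 0 < r) (w : ℂ) :
    ((r:ℂ) * w)^(1/2:ℂ) = (r:ℂ)^(1/2:ℂ) * w^(1/2:ℂ) := by
  have hr' : (r:ℂ) ≠ 0 := by exact_mod_cast hr.ne'
  by_cases hw : w = 0
  · subst hw; simp
  · rw [Complex.cpow_def_of_ne_zero (mul_ne_zero hr' hw), Complex.cpow_def_of_ne_zero hr',
      Complex.cpow_def_of_ne_zero hw, Complex.log_ofReal_mul hr hw, ← Complex.exp_add,
      ← Complex.ofReal_log hr.le]
    congr 1; ring

lemma B_lim {l : ℝ} (hl : 0 < l) (a : ℝ) : Tendsto (fun N : ℕ => ((√√(N:ℝ) : ℝ) : ℂ) *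
    Bf (tN l N) (Complex.exp (-(Complex.I * ((a / √N : ℝ) : ℂ))))) atTop
    (𝓝 (c0 * ((2 * √l : ℝ) + Complex.I * a)^(1/2:ℂ))) := by
  set z : ℕ → ℂ := fun N => Complex.exp (-(Complex.I * ((a / √N : ℝ) : ℂ))) with hz
  set d : ℕ → ℝ := fun N => √(1 - tN l N) with hd
  set e : ℕ → ℝ := fun N => √(1 + tN l N) with he
  have hdl : Tendsto d atTop (𝓝 0) := d_lim0 l
  have hel : Tendsto e atTop (𝓝 √2) := by
    have := (Real.continuous_sqrt.tendsto _).comp ((tN_lim l).const_add 1)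
    norm_num at this
    exact this
  have hκ : Tendsto (fun N => (((1 + d N) * (1 + e N) / 4 : ℝ) : ℂ)) atTop
      (𝓝 (((1 + √2)/4 : ℝ) : ℂ)) := by
    apply (Complex.continuous_ofReal.tendsto _).comp
    have := ((hdl.const_add 1).mul (hel.const_add 1)).div_const 4
    simpa using this
  have hD : Tendsto (fun N => (1 - (((e N - 1)/(e N + 1) : ℝ) : ℂ) * z N)^(1/2:ℂ)) atTop
      (𝓝 ((√(1-D0) : ℝ) : ℂ)) := by
    have h1 : Tendsto (fun N => (e N - 1)/(e N + 1)) atTop (𝓝 D0) :=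
      (hel.sub_const 1).div (hel.add_const 1) (by positivity)
    have h2 : Tendsto (fun N => 1 - (((e N - 1)/(e N + 1) : ℝ) : ℂ) * z N) atTop
        (𝓝 (1 - (D0:ℂ) * 1)) :=
      (((Complex.continuous_ofReal.tendsto _).comp h1).mul (z_lim a)).const_sub 1
    have h3 : 1 - (D0:ℂ) * 1 = ((1 - D0 : ℝ) : ℂ) := by push_cast; ring
    rw [h3] at h2
    have h4 : ((√(1-D0) : ℝ) : ℂ) = ((1 - D0 : ℝ) : ℂ)^(1/2:ℂ) := by
      rw [Real.sqrt_eq_rpow, Complex.ofReal_cpow (by linarith [D0_lt])]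
      norm_num
    rw [h4]
    refine h2.cpow (tendsto_const_nhds (x := (1/2:ℂ))) (Or.inl ?_)
    rw [Complex.ofReal_re]; linarith [D0_lt]
  have hC : Tendsto (fun N : ℕ => (((√(N:ℝ) : ℝ) : ℂ) *
      (1 - (((1 - d N)/(1 + d N) : ℝ) : ℂ) * z N))^(1/2:ℂ)) atTop
      (𝓝 (((2 * √l : ℝ) + Complex.I * a)^(1/2:ℂ))) := by
    have h1 : Tendsto (fun N : ℕ => 2 * (√(N:ℝ) * d N) / (1 + d N)) atTop (𝓝 (2 * √l)) := by
      have := ((d_lim l).const_mul 2).div (hdl.const_add 1) (by norm_num)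
      rw [add_zero, div_one] at this
      exact this
    have h2 : Tendsto (fun N : ℕ => ((2 * (√(N:ℝ) * d N) / (1 + d N) : ℝ) : ℂ) * z N +
      ((√(N:ℝ) : ℝ) : ℂ) * (1 - z N)) atTop (𝓝 (((2 * √l : ℝ) : ℂ) * 1 + Complex.I * a)) :=
      (((Complex.continuous_ofReal.tendsto _).comp h1).mul (z_lim a)).add (lim_cexp a)
    rw [mul_one] at h2
    have hpos : 0 < ((2 * √l : ℝ) + Complex.I * a : ℂ).re := by
      have := Real.sqrt_pos.mpr hl
      simp; exact hl
    have h3 := h2.cpow (tendsto_const_nhds (x := (1/2:ℂ))) (Or.inl hpos)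
    refine h3.congr (fun N => ?_)
    congr 1
    have : (1 : ℝ) + d N ≠ 0 := by
      have : 0 ≤ d N := Real.sqrt_nonneg _
      positivity
    have hc : (1 - d N)/(1 + d N) = 1 - 2 * d N / (1 + d N) := by field_simp; ring
    have hc' : 2 * (√(N:ℝ) * d N) / (1 + d N) = √(N:ℝ) * (2 * d N / (1 + d N)) := by ring
    rw [hc, hc']
    push_cast
    ring
  have := (hκ.mul hC).mul hD
  have e1 : (((1 + √2)/4 : ℝ) : ℂ) * ((2 * √l : ℝ) + Complex.I * a)^(1/2:ℂ) * ((√(1-D0) : ℝ) : ℂ) =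
    c0 * ((2 * √l : ℝ) + Complex.I * a)^(1/2:ℂ) := by
    rw [c0]; push_cast; ring
  rw [e1] at this
  refine this.congr' ?_
  filter_upwards [tN_mem hl, eventually_gt_atTop 0] with N hN hN0
  rw [Bf_eq hN.1 hN.2 (a / √N)]
  change _ = _ * ((((1 + d N) * (1 + e N) / 4 : ℝ) : ℂ) * wf ((1 - d N)/(1 + d N))
    ((e N - 1)/(e N + 1)) (z N))
  have h4 : ((√√(N:ℝ) : ℝ) : ℂ) = ((√(N:ℝ) : ℝ) : ℂ)^(1/2:ℂ) := by
    rw [Real.sqrt_eq_rpow (√(N:ℝ)), Complex.ofReal_cpow (Real.sqrt_nonneg _)]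
    norm_num
  have h5 : (((√(N:ℝ) : ℝ) : ℂ) *
      (1 - (((1 - d N)/(1 + d N) : ℝ) : ℂ) * z N))^(1/2:ℂ) = ((√√(N:ℝ) : ℝ) : ℂ) *
      (1 - (((1 - d N)/(1 + d N) : ℝ) : ℂ) * z N)^(1/2:ℂ) := by
    rw [h4]
    exact real_mul_cpow (Real.sqrt_pos.mpr (by exact_mod_cast hN0)) _
  rw [h5]; unfold wf; ring

/-- the normalization `N^{-3/4}` -/
noncomputable def nu (N : ℕ) : ℝ := √√(N:ℝ) / N

theorem lap_lim {l : ℝ} (hl : 0 < l) (a b : ℝ) : Tendsto (fun N : ℕ => (nu N : ℂ) *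
    ∑' n, (tN l N : ℂ)^n * L n (ch (a/√N) (b/√N))) atTop
    (𝓝 (c0 * ((2 * √l : ℝ) + Complex.I * a)^(1/2:ℂ) / ((l + (a^2+b^2)/4 : ℝ) : ℂ))) := by
  have hne : ((l + (a^2+b^2)/4 : ℝ) : ℂ) ≠ 0 := by
    have : 0 < l + (a^2+b^2)/4 := by positivity
    exact_mod_cast this.ne'
  have := (B_lim hl a).div ((Complex.continuous_ofReal.tendsto _).comp (den_lim l a b)) hne
  refine this.congr' ?_
  filter_upwards [tN_mem hl, eventually_gt_atTop 0] with N hN hN0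
  have hg := gen_ch hN.1.le hN.2 (a/√N) (b/√N)
  simp only [Pi.div_apply, Function.comp]
  rw [← hg]
  have h1 : (1 - (tN l N : ℂ) * (cc (a/√N) (b/√N) : ℂ)) ≠ 0 := by
    have : 0 < 1 - tN l N * cc (a/√N) (b/√N) := by
      have : cc (a/√N) (b/√N) ≤ 1 := by
        have := Real.cos_le_one (a/√N)
        have := Real.cos_le_one (b/√N)
        unfold cc; linarith
      nlinarith
    exact_mod_cast this.ne'
  have h2 : (N:ℂ) ≠ 0 := by exact_mod_cast hN0.ne'
  unfold nu
  push_cast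
  field_simp

end SlitPf


namespace SlitPf
open Set Topology Filter MeasureTheory

/-- discrete test weight -/
noncomputable def wt (F : ℝ → ℝ) (N n : ℕ) : ℝ := (tN 1 N)^n * F ((tN 1 N)^n)

/-- continuous test weight -/
noncomputable def wc (F : ℝ → ℝ) (s : ℝ) : ℝ := Real.exp (-s) * F (Real.exp (-s))

lemma tN_pow (N n : ℕ) : (tN 1 N)^n = Real.exp (-((n:ℝ)/N)) := by
  unfold tN
  rw [← Real.exp_nat_mul]; congr 1; ring

lemma tN_pow_mem (N n : ℕ) : (tN 1 N)^n ∈ Icc (0:ℝ) 1 := by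
  rw [tN_pow]
  exact ⟨(Real.exp_pos _).le, Real.exp_le_one_iff.mpr (by simp; positivity)⟩

lemma tN_succ (N n k : ℕ) : (tN ((k+1 : ℕ):ℝ) N)^n = (tN 1 N)^n * ((tN 1 N)^n)^k := by
  rw [← pow_succ', ← pow_mul, mul_comm n, pow_mul]
  congr 1
  unfold tN
  rw [← Real.exp_nat_mul]; congr 1; push_cast; ring

section
variable (a : ℕ → ℕ → ℂ) (b : ℕ → ℕ → ℝ) (h : ℝ → ℂ) (M : ℝ)

lemma kar_summ (F : ℝ → ℝ) (c : ℝ) (hF : ∀ u ∈ Icc (0:ℝ) 1, |F u| ≤ c) (N : ℕ)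
    (hab : ∀ n, ‖a N n‖ ≤ b N n) (hs : Summable (fun n => (tN 1 N)^n * b N n)) :
    Summable (fun n => (wt F N n : ℂ) * a N n) ∧
    ‖∑' n, (wt F N n : ℂ) * a N n‖ ≤ c * ∑' n, (tN 1 N)^n * b N n := by
  have hb : ∀ n, ‖(wt F N n : ℂ) * a N n‖ ≤ c * ((tN 1 N)^n * b N n) := by
    intro n
    have hm := tN_pow_mem N n
    rw [norm_mul, Complex.norm_real, wt, norm_mul, Real.norm_of_nonneg hm.1]
    have h1 := hF _ hm
    have h2 : 0 ≤ b N n := (norm_nonneg _).trans (hab n)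
    calc (tN 1 N)^n * ‖F ((tN 1 N)^n)‖ * ‖a N n‖ ≤ (tN 1 N)^n * c * b N n := by
          have := hm.1
          have hc : 0 ≤ c := (abs_nonneg _).trans h1
          gcongr
          · exact h1
          · exact hab n
      _ = _ := by ring
  have hs2 := hs.mul_left c
  refine ⟨Summable.of_norm_bounded hs2 hb, ?_⟩
  rw [← tsum_mul_left]
  exact tsum_of_norm_bounded hs2.hasSum hb

lemma bdd_of_cont (F : ℝ → ℝ) (hF : Continuous F) : ∃ c, ∀ u ∈ Icc (0:ℝ) 1, |F u| ≤ c := by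
  obtain ⟨c, hc⟩ := isCompact_Icc.exists_bound_of_continuousOn (s := Icc (0:ℝ) 1) hF.continuousOn
  exact ⟨c, hc⟩

lemma wc_integrable (hI : IntegrableOn (fun s => (Real.exp (-s) : ℂ) * h s) (Ioi 0))
    (F : ℝ → ℝ) (hF : Continuous F) (c : ℝ) (hc : ∀ u ∈ Icc (0:ℝ) 1, |F u| ≤ c) :
    IntegrableOn (fun s => (wc F s : ℂ) * h s) (Ioi 0) ∧
    ‖∫ s in Ioi (0:ℝ), (wc F s : ℂ) * h s‖ ≤ c * ∫ s in Ioi (0:ℝ), ‖(Real.exp (-s) : ℂ) * h s‖ := by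
  have e : (fun s => (wc F s : ℂ) * h s) =
      fun s => (F (Real.exp (-s)) : ℂ) * ((Real.exp (-s) : ℂ) * h s) := by
    ext s; simp only [wc]; push_cast; ring
  have hb : ∀ᵐ s ∂(volume.restrict (Ioi (0:ℝ))), ‖(F (Real.exp (-s)) : ℂ)‖ ≤ c := by
    filter_upwards [ae_restrict_mem measurableSet_Ioi] with s hs
    rw [Complex.norm_real]
    apply hc
    exact ⟨(Real.exp_pos _).le, Real.exp_le_one_iff.mpr (by simp at hs; linarith)⟩
  rw [e]
  constructor
  · apply Integrable.bdd_mul hI _ hb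
    exact (by fun_prop : Continuous fun s => (F (Real.exp (-s)) : ℂ)).aestronglyMeasurable
  · rw [← integral_const_mul]
    apply norm_integral_le_of_norm_le (hI.norm.const_mul c)
    filter_upwards [hb] with s hs
    rw [norm_mul]; gcongr

lemma kar
    (hab : ∀ N n, ‖a N n‖ ≤ b N n)
    (hs : ∀ᶠ N in atTop, Summable (fun n => (tN 1 N)^n * b N n) ∧ ∑' n, (tN 1 N)^n * b N n ≤ M)
    (hI : IntegrableOn (fun s => (Real.exp (-s) : ℂ) * h s) (Ioi 0))
    (hl : ∀ k : ℕ, 1 ≤ k → Tendsto (fun N => ∑' n, (tN k N : ℂ)^n * a N n) atTop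
      (𝓝 (∫ s in Ioi (0:ℝ), (Real.exp (-(k*s)) : ℂ) * h s)))
    (F : ℝ → ℝ) (hF : Continuous F) :
    Tendsto (fun N => ∑' n, (wt F N n : ℂ) * a N n) atTop
      (𝓝 (∫ s in Ioi (0:ℝ), (wc F s : ℂ) * h s)) := by
  -- polynomials
  have hpoly : ∀ P : Polynomial ℝ, Tendsto (fun N => ∑' n, (wt (fun x => P.eval x) N n : ℂ) * a N n)
      atTop (𝓝 (∫ s in Ioi (0:ℝ), (wc (fun x => P.eval x) s : ℂ) * h s)) := by
    intro P
    have hmono : ∀ k : ℕ, Continuous (fun x : ℝ => x^k) := fun k => by fun_prop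
    have hmb : ∀ k : ℕ, ∀ u ∈ Icc (0:ℝ) 1, |u^k| ≤ 1 := by
      intro k u hu
      rw [abs_of_nonneg (pow_nonneg hu.1 k)]
      exact pow_le_one₀ hu.1 hu.2
    have hwm : ∀ k N n, (wt (fun x => x^k) N n : ℂ) = (tN ((k+1:ℕ):ℝ) N : ℂ)^n := by
      intro k N n
      rw [← Complex.ofReal_pow, tN_succ]; rfl
    have hwcm : ∀ (k : ℕ) (s : ℝ), wc (fun x => x^k) s = Real.exp (-((k+1:ℕ)*s)) := by
      intro k s
      show Real.exp (-s) * (Real.exp (-s))^k = _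
      rw [← Real.exp_nat_mul, ← Real.exp_add]; congr 1; push_cast; ring
    have h1 : ∫ s in Ioi (0:ℝ), (wc (fun x => P.eval x) s : ℂ) * h s =
        ∑ k ∈ Finset.range (P.natDegree + 1), (P.coeff k : ℂ) *
          ∫ s in Ioi (0:ℝ), (Real.exp (-((k+1:ℕ)*s)) : ℂ) * h s := by
      simp_rw [← integral_const_mul]
      rw [← integral_finsetSum]
      · congr 1; ext s
        simp_rw [← hwcm]
        simp only [wc, Polynomial.eval_eq_sum_range]
        push_cast
        rw [Finset.mul_sum, Finset.sum_mul]
        refine Finset.sum_congr rfl fun k _ => ?_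
        ring
      · intro k _
        apply Integrable.const_mul
        simp_rw [← hwcm]
        exact (wc_integrable h hI _ (hmono k) 1 (hmb k)).1
    rw [h1]
    have h2 := tendsto_finsetSum (Finset.range (P.natDegree + 1)) (fun k _ =>
      (hl (k+1) (by omega)).const_mul (P.coeff k : ℂ))
    refine h2.congr' ?_
    filter_upwards [hs] with N hN
    simp_rw [← tsum_mul_left]
    rw [← Summable.tsum_finsetSum]
    · congr 1; ext n
      simp_rw [← hwm]
      simp only [wt, Polynomial.eval_eq_sum_range]
      push_cast
      rw [Finset.mul_sum, Finset.sum_mul]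
      refine Finset.sum_congr rfl fun k _ => ?_
      ring
    · intro k _
      apply Summable.mul_left
      simp_rw [← hwm]
      exact (kar_summ a b _ 1 (hmb k) N (hab N) hN.1).1
  -- general
  set I := ∫ s in Ioi (0:ℝ), ‖(Real.exp (-s) : ℂ) * h s‖ with hIdef
  have hI0 : 0 ≤ I := integral_nonneg (fun _ => norm_nonneg _)
  have hM : 0 ≤ max M 0 := le_max_right _ _
  rw [Metric.tendsto_nhds]
  intro ε hε
  set η := ε / (3 * (I + max M 0 + 1)) with hη
  have hden : 0 < I + max M 0 + 1 := by linarith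
  have hη0 : 0 < η := by positivity
  have hηε : η * (I + max M 0 + 1) = ε / 3 := by rw [hη]; field_simp
  obtain ⟨P, hP⟩ := exists_polynomial_near_of_continuousOn 0 1 F hF.continuousOn η hη0
  have hPc : Continuous (fun x => P.eval x) := P.continuous
  have hdiff : ∀ u ∈ Icc (0:ℝ) 1, |(fun x => F x - P.eval x) u| ≤ η := by
    intro u hu
    rw [abs_sub_comm]
    exact (hP u hu).le
  obtain ⟨cF, hcF⟩ := bdd_of_cont F hF
  obtain ⟨cP, hcP⟩ := bdd_of_cont _ hPc
  have hpl := (Metric.tendsto_nhds.mp (hpoly P)) (ε/3) (by linarith)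
  filter_upwards [hs, hpl] with N hN hN2
  rw [dist_eq_norm] at hN2 ⊢
  have s1 := kar_summ a b _ η hdiff N (hab N) hN.1
  have s2 := kar_summ a b _ cF hcF N (hab N) hN.1
  have s3 := kar_summ a b _ cP hcP N (hab N) hN.1
  have i1 := wc_integrable h hI (fun x => F x - P.eval x) (hF.sub hPc) η hdiff
  have i2 := wc_integrable h hI _ hF cF hcF
  have i3 := wc_integrable h hI _ hPc cP hcP
  have e1 : ∑' n, (wt (fun x => F x - P.eval x) N n : ℂ) * a N n =
      ∑' n, (wt F N n : ℂ) * a N n - ∑' n, (wt (fun x => P.eval x) N n : ℂ) * a N n := by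
    rw [← s2.1.tsum_sub s3.1]; congr 1; ext n; simp only [wt]; push_cast; ring
  have e2 : ∫ s in Ioi (0:ℝ), (wc (fun x => F x - P.eval x) s : ℂ) * h s =
      (∫ s in Ioi (0:ℝ), (wc F s : ℂ) * h s) - ∫ s in Ioi (0:ℝ), (wc (fun x => P.eval x) s : ℂ) * h s := by
    rw [← integral_sub i2.1 i3.1]
    congr 1; ext s; simp only [wc]; push_cast; ring
  have b1 := s1.2
  have b2 := i1.2
  rw [e1] at b1
  rw [e2] at b2
  have b3 : η * ∑' n, (tN 1 N)^n * b N n ≤ η * max M 0 := by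
    gcongr; exact hN.2.trans (le_max_left _ _)
  have b4 : η * (I + max M 0) < ε/3 + ε/3 := by nlinarith
  calc ‖∑' n, (wt F N n : ℂ) * a N n - ∫ s in Ioi (0:ℝ), (wc F s : ℂ) * h s‖
      = ‖(∑' n, (wt F N n : ℂ) * a N n - ∑' n, (wt (fun x => P.eval x) N n : ℂ) * a N n)
        + (∑' n, (wt (fun x => P.eval x) N n : ℂ) * a N n -
          ∫ s in Ioi (0:ℝ), (wc (fun x => P.eval x) s : ℂ) * h s)
        - ((∫ s in Ioi (0:ℝ), (wc F s : ℂ) * h s) -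
          ∫ s in Ioi (0:ℝ), (wc (fun x => P.eval x) s : ℂ) * h s)‖ := by congr 1; ring
    _ ≤ _ := (norm_sub_le _ _).trans (add_le_add_left (norm_add_le _ _) _)
    _ < ε := by
      have : η * (∑' n, (tN 1 N)^n * b N n) + η * I ≤ η * (I + max M 0) := by linarith
      linarith

end

end SlitPf


namespace SlitPf
open Set Topology Filter MeasureTheory

/-- window weights -/
def IsWin (A B : ℝ) (F : ℝ → ℝ) : Prop :=
  Continuous F ∧ (∀ u, 0 ≤ F u) ∧ (∀ s, F (Real.exp (-s)) ≠ 0 → A < s ∧ s < B) ∧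
    0 < ∫ s in Ioi (0:ℝ), wc F s

lemma exp_one_int : IntegrableOn (fun s => (Real.exp (-s) : ℂ) * ((fun _ => 1 : ℝ → ℂ) s)) (Ioi 0) := by
  simp only [mul_one]
  exact (integrableOn_exp_neg_Ioi 0).ofReal

lemma wc_int_real (F : ℝ → ℝ) (hF : Continuous F) : IntegrableOn (wc F) (Ioi 0) := by
  obtain ⟨c, hc⟩ := bdd_of_cont F hF
  have := (wc_integrable (fun _ => 1) exp_one_int F hF c hc).1
  simp only [mul_one] at this
  have := this.re
  simp only [RCLike.re_to_complex, Complex.ofReal_re] at this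
  exact this

lemma exists_win (A B : ℝ) (hA : 0 ≤ A) (hAB : A < B) : ∃ F, IsWin A B F := by
  let F : ℝ → ℝ := fun u => max 0 ((u - Real.exp (-B)) * (Real.exp (-A) - u))
  have hFc : Continuous F := by fun_prop
  have hF0 : ∀ u, 0 ≤ F u := fun u => le_max_left _ _
  refine ⟨F, hFc, hF0, ?_, ?_⟩
  · intro s hs
    by_contra hcon
    apply hs
    apply max_eq_left
    by_cases h1 : A < s
    · have h2 : B ≤ s := by by_contra h3; exact hcon ⟨h1, not_le.mp h3⟩
      have e1 : Real.exp (-s) ≤ Real.exp (-B) := Real.exp_le_exp.mpr (by linarith)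
      have e2 : Real.exp (-s) ≤ Real.exp (-A) := Real.exp_le_exp.mpr (by linarith)
      exact mul_nonpos_of_nonpos_of_nonneg (by linarith) (by linarith)
    · have e1 : Real.exp (-A) ≤ Real.exp (-s) := Real.exp_le_exp.mpr (by linarith)
      have e2 : Real.exp (-B) ≤ Real.exp (-s) := Real.exp_le_exp.mpr (by linarith)
      exact mul_nonpos_of_nonneg_of_nonpos (by linarith) (by linarith)
  · have hw0 : ∀ s, 0 ≤ wc F s := fun s => mul_nonneg (Real.exp_pos _).le (hF0 _)
    rw [setIntegral_pos_iff_support_of_nonneg_ae (Eventually.of_forall hw0) (wc_int_real F hFc)]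
    have : Ioo A B ⊆ Function.support (wc F) ∩ Ioi 0 := by
      intro s hs
      refine ⟨?_, lt_of_le_of_lt hA hs.1⟩
      have e1 : Real.exp (-B) < Real.exp (-s) := Real.exp_lt_exp.mpr (by linarith [hs.2])
      have e2 : Real.exp (-s) < Real.exp (-A) := Real.exp_lt_exp.mpr (by linarith [hs.1])
      have : 0 < F (Real.exp (-s)) := lt_max_of_lt_right (mul_pos (by linarith) (by linarith))
      exact (mul_pos (Real.exp_pos _) this).ne'
    refine lt_of_lt_of_le ?_ (measure_mono this)
    simp [hAB]

lemma win_avg (A B : ℝ) (hA : 0 ≤ A) (F : ℝ → ℝ) (hF : IsWin A B F) (h : ℝ → ℂ) (h1 : ℂ) (δ : ℝ)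
    (hI : IntegrableOn (fun s => (Real.exp (-s) : ℂ) * h s) (Ioi 0))
    (hδ : ∀ s, A < s → s < B → ‖h s - h1‖ ≤ δ) :
    ‖(∫ s in Ioi (0:ℝ), (wc F s : ℂ) * h s) / ((∫ s in Ioi (0:ℝ), wc F s : ℝ) : ℂ) - h1‖ ≤ δ := by
  obtain ⟨hc, h0, hsup, hJ⟩ := hF
  set J := ∫ s in Ioi (0:ℝ), wc F s with hJd
  have hJ' : (J : ℂ) ≠ 0 := by exact_mod_cast hJ.ne'
  obtain ⟨c, hcb⟩ := bdd_of_cont F hc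
  have i1 := (wc_integrable h hI F hc c hcb).1
  have i2 := wc_int_real F hc
  have i3 : IntegrableOn (fun s => (wc F s : ℂ) * h1) (Ioi 0) := (i2.ofReal (𝕜 := ℂ)).mul_const h1
  have e : (∫ s in Ioi (0:ℝ), (wc F s : ℂ) * h s) - J * h1
      = ∫ s in Ioi (0:ℝ), (wc F s : ℂ) * (h s - h1) := by
    rw [hJd, ← integral_complex_ofReal, ← integral_mul_const, ← integral_sub i1 i3]
    congr 1; ext s; ring
  have hb : ‖(∫ s in Ioi (0:ℝ), (wc F s : ℂ) * h s) - J * h1‖ ≤ J * δ := by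
    rw [e, hJd, ← integral_mul_const]
    apply norm_integral_le_of_norm_le (i2.mul_const _)
    refine Eventually.of_forall fun s => ?_
    have hw : 0 ≤ wc F s := mul_nonneg (Real.exp_pos _).le (h0 _)
    rw [norm_mul, Complex.norm_real, Real.norm_of_nonneg hw]
    by_cases hz : F (Real.exp (-s)) = 0
    · simp [wc, hz]
    · have := hsup s hz
      exact mul_le_mul_of_nonneg_left (hδ s this.1 this.2) hw
  have : (∫ s in Ioi (0:ℝ), (wc F s : ℂ) * h s) / (J:ℂ) - h1 =
      ((∫ s in Ioi (0:ℝ), (wc F s : ℂ) * h s) - J * h1) / J := by field_simp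
  rw [this, norm_div, Complex.norm_real, Real.norm_of_nonneg hJ.le, div_le_iff₀ hJ]
  linarith

/-- total discrete weight -/
noncomputable def WW (F : ℝ → ℝ) (N : ℕ) : ℝ := ∑' n, wt F N n * (1/(N:ℝ))

lemma tN_mem1 {l : ℝ} (hl : 0 < l) {N : ℕ} (hN : 0 < N) : 0 < tN l N ∧ tN l N < 1 := by
  refine ⟨Real.exp_pos _, ?_⟩
  unfold tN
  have hN' : (0:ℝ) < N := by exact_mod_cast hN
  exact Real.exp_lt_one_iff.mpr (div_neg_of_neg_of_pos (by linarith) hN')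

lemma geo_lim (k : ℝ) (hk : 0 < k) : 
    Tendsto (fun N : ℕ => ∑' n, (tN k N)^n * (1/(N:ℝ))) atTop (𝓝 (1/k)) := by
  have h := (lim_exp k).inv₀ hk.ne'
  rw [one_div]
  refine h.congr' ?_
  filter_upwards [eventually_gt_atTop 0] with N hN
  have hm := tN_mem1 hk hN
  rw [tsum_mul_right, tsum_geometric_of_lt_one hm.1.le hm.2]
  unfold tN
  rw [mul_inv]; ring

lemma geo_summ (k : ℝ) (hk : 0 < k) (N : ℕ) (hN : 0 < N) : 
    Summable (fun n => (tN k N)^n * (1/(N:ℝ))) := by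
  have hm := tN_mem1 hk hN
  exact (summable_geometric_of_lt_one hm.1.le hm.2).mul_right _

lemma WW_lim (F : ℝ → ℝ) (hF : Continuous F) :
    Tendsto (fun N => ((WW F N : ℝ):ℂ)) atTop (𝓝 ((∫ s in Ioi (0:ℝ), wc F s : ℝ) : ℂ)) := by
  have := kar (fun N _ => ((1/(N:ℝ) : ℝ):ℂ)) (fun N _ => 1/(N:ℝ)) (fun _ => 1) 2
    (fun N n => by rw [Complex.norm_real, Real.norm_of_nonneg (by positivity)])
    (by
      filter_upwards [(geo_lim 1 one_pos).eventually (gt_mem_nhds (by norm_num : (1:ℝ)/1 < 2)),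
        eventually_gt_atTop 0] with N h1 h2
      exact ⟨geo_summ 1 one_pos N h2, h1.le⟩)
    exp_one_int
    (by
      intro k hk
      have hk' : (0:ℝ) < k := by exact_mod_cast hk
      have h1 := geo_lim k hk'
      have e : ∫ s in Ioi (0:ℝ), (Real.exp (-(k*s)) : ℂ) * (1:ℂ) = ((1/k : ℝ) : ℂ) := by
        simp only [mul_one]
        rw [integral_complex_ofReal]
        congr 1
        have := integral_exp_mul_Ioi (a := -(k:ℝ)) (by linarith) 0
        simpa [neg_mul] using this
      rw [e]
      have h2 := (Complex.continuous_ofReal.tendsto _).comp h1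
      refine h2.congr fun N => ?_
      simp only [Function.comp]
      push_cast; rfl)
    F hF
  have e : ∫ s in Ioi (0:ℝ), (wc F s : ℂ) * (fun _ => (1:ℂ)) s = ((∫ s in Ioi (0:ℝ), wc F s : ℝ) : ℂ) := by
    simp only [mul_one]
    exact integral_complex_ofReal
  rw [e] at this
  refine this.congr fun N => ?_
  unfold WW
  push_cast; rfl

lemma avg_lim (A B δ : ℝ) (hA : 0 ≤ A) (F : ℝ → ℝ) (hF : IsWin A B F) 
    (a : ℕ → ℕ → ℂ) (h : ℝ → ℂ) (h1 : ℂ) 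
    (hI : IntegrableOn (fun s => (Real.exp (-s) : ℂ) * h s) (Ioi 0))
    (hk : Tendsto (fun N => ∑' n, (wt F N n : ℂ) * a N n) atTop
      (𝓝 (∫ s in Ioi (0:ℝ), (wc F s : ℂ) * h s)))
    (hδ : ∀ s, A < s → s < B → ‖h s - h1‖ ≤ δ) : 
    ∃ K, ‖K - h1‖ ≤ δ ∧ Tendsto (fun N => (∑' n, (wt F N n : ℂ) * a N n) / (WW F N : ℂ)) atTop (𝓝 K) :=
  ⟨_, win_avg A B hA F hF h h1 δ hI hδ, hk.div (WW_lim F hF.1) (by exact_mod_cast hF.2.2.2.ne')⟩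

lemma WW_pos (A B : ℝ) (F : ℝ → ℝ) (hF : IsWin A B F) : ∀ᶠ N in atTop, 0 < WW F N := by
  have := (WW_lim F hF.1)
  have := (Complex.continuous_re.tendsto _).comp this
  exact this.eventually (lt_mem_nhds hF.2.2.2)

lemma wt_nonneg (A B : ℝ) (F : ℝ → ℝ) (hF : IsWin A B F) (N n : ℕ) : 0 ≤ wt F N n :=
  mul_nonneg (tN_pow_mem N n).1 (hF.2.1 _)

lemma wt_supp (A B : ℝ) (F : ℝ → ℝ) (hF : IsWin A B F) (N n : ℕ) (hN : 0 < N) (h : wt F N n ≠ 0) :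
    A * N < n ∧ n < B * N := by
  have h1 : F ((tN 1 N)^n) ≠ 0 := fun h2 => h (by simp [wt, h2])
  rw [tN_pow] at h1
  have hN' : (0:ℝ) < N := by exact_mod_cast hN
  have := hF.2.2.1 _ h1
  rw [lt_div_iff₀ hN', div_lt_iff₀ hN'] at this
  exact this

end SlitPf


namespace SlitPf
open Set Topology Filter MeasureTheory

/-- `h` has the Laplace transform appearing in `lap_lim` -/
def HLap (h : ℝ → ℂ) (a b : ℝ) : Prop :=
  IntegrableOn (fun s => (Real.exp (-s) : ℂ) * h s) (Ioi 0) ∧ ContinuousAt h 1 ∧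
  ∀ l : ℝ, 0 < l → ∫ s in Ioi (0:ℝ), (Real.exp (-(l*s)) : ℂ) * h s =
    c0 * ((2 * √l : ℝ) + Complex.I * a)^(1/2:ℂ) / ((l + (a^2+b^2)/4 : ℝ) : ℂ)

lemma L_ofReal (n : ℕ) : ∀ f : ℤ × ℤ → ℝ, L n (fun p => (f p : ℂ)) = ((L n f : ℝ) : ℂ) := by
  have hT : ∀ f : ℤ × ℤ → ℝ, T (fun p => (f p : ℂ)) = fun p => ((T f p : ℝ) : ℂ) := by
    intro f; ext p; simp [T]; ring
  have hr : ∀ f : ℤ × ℤ → ℝ, res slitHᶜ (fun p => (f p : ℂ)) = fun p => ((res slitHᶜ f p : ℝ) : ℂ) := by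
    intro f; ext p; by_cases h : p ∈ slitHᶜ
    · simp [res, h]
    · simp [res, h]
  induction n with
  | zero => intro f; rfl
  | succ n ih => intro f; simp only [L, hr, hT, ih]

lemma L_ch_zero (n : ℕ) : L n (ch 0 0) = (sv n : ℂ) := by
  have : ch 0 0 = fun _ => (((1:ℝ)) : ℂ) := by ext p; simp [ch]
  rw [this, L_ofReal]; rfl

lemma nu_nonneg (N : ℕ) : 0 ≤ nu N := by unfold nu; positivity

lemma wt_summ (F : ℝ → ℝ) (hF : Continuous F) (N : ℕ) (hN : 0 < N) (y : ℕ → ℝ) (C : ℝ)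
    (hy : ∀ n, |y n| ≤ C) : Summable (fun n => wt F N n * y n) := by
  obtain ⟨c, hc⟩ := bdd_of_cont F hF
  have hm := tN_mem1 one_pos hN
  refine Summable.of_norm_bounded ((summable_geometric_of_lt_one hm.1.le hm.2).mul_right (c*C)) ?_
  intro n
  have h1 := hc _ (tN_pow_mem N n)
  rw [norm_mul, wt, norm_mul, Real.norm_of_nonneg (tN_pow_mem N n).1, mul_assoc]
  have := (tN_pow_mem N n).1
  have h0 : 0 ≤ c := (abs_nonneg _).trans h1
  gcongr
  · exact h1
  · exact hy n

/-- average of the survival probabilities -/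
noncomputable def AA (F : ℝ → ℝ) (N : ℕ) : ℝ := ∑' n, wt F N n * (nu N * sv n)

/-- average of the characters -/
noncomputable def BB (F : ℝ → ℝ) (a b : ℝ) (N : ℕ) : ℂ :=
  ∑' n, (wt F N n : ℂ) * ((nu N : ℂ) * L n (ch (a/√N) (b/√N)))

lemma sv_bdd : ∀ᶠ N in atTop, Summable (fun n => (tN 1 N)^n * (nu N * sv n)) ∧ 
    ∑' n, (tN 1 N)^n * (nu N * sv n) ≤ ‖c0 * ((2 * √(1:ℝ) : ℝ) + Complex.I * (0:ℝ))^(1/2:ℂ) / ((1 + ((0:ℝ)^2+(0:ℝ)^2)/4 : ℝ) : ℂ)‖ + 1 := by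
  have h1 := (lap_lim one_pos 0 0).norm
  have h2 := h1.eventually (gt_mem_nhds (lt_add_one _))
  filter_upwards [h2, eventually_gt_atTop 0] with N h2 hN
  have hm := tN_mem1 one_pos hN
  constructor
  · refine Summable.of_norm_bounded ((summable_geometric_of_lt_one hm.1.le hm.2).mul_right (nu N)) ?_
    intro n
    have := sv_nonneg n
    have := nu_nonneg N
    have := sv_le_one n
    have h3 := (tN_pow_mem N n).1
    rw [Real.norm_of_nonneg (by positivity)]
    gcongr
    nlinarith
  · refine le_trans (le_trans (Real.le_norm_self _) (le_of_eq ?_)) h2.le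
    rw [← Complex.norm_real, Complex.ofReal_tsum, ← tsum_mul_left]
    congr 2; ext n
    simp only [zero_div, L_ch_zero]
    push_cast; ring

lemma kar_phi (a b : ℝ) (h : ℝ → ℂ) (hh : HLap h a b) (F : ℝ → ℝ) (hF : Continuous F) :
    Tendsto (BB F a b) atTop (𝓝 (∫ s in Ioi (0:ℝ), (wc F s : ℂ) * h s)) := by
  refine kar (fun N n => (nu N : ℂ) * L n (ch (a/√N) (b/√N))) (fun N n => nu N * sv n) h _ ?_ sv_bdd hh.1 ?_ F hF
  · intro N n
    rw [norm_mul, Complex.norm_real, Real.norm_of_nonneg (nu_nonneg N)]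
    exact mul_le_mul_of_nonneg_left (L_norm_le n _ (fun p => (ch_norm _ _ p).le)) (nu_nonneg N)
  · intro k hk
    have hk' : (0:ℝ) < k := by exact_mod_cast hk
    rw [hh.2.2 k hk']
    refine (lap_lim hk' a b).congr fun N => ?_
    rw [← tsum_mul_left]
    congr 1; ext n; ring

lemma AA_eq (F : ℝ → ℝ) (N : ℕ) : (AA F N : ℂ) = BB F 0 0 N := by
  unfold AA BB
  rw [Complex.ofReal_tsum]
  congr 1; ext n
  simp only [zero_div, L_ch_zero]
  push_cast; ring

lemma near (h : ℝ → ℂ) (hc : ContinuousAt h 1) (δ : ℝ) (hδ : 0 < δ) :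
    ∃ ε > 0, ε < 1 ∧ ∀ s, |s - 1| < ε → ‖h s - h 1‖ ≤ δ := by
  obtain ⟨ε, h1, h2⟩ := Metric.continuousAt_iff.mp hc δ hδ
  refine ⟨min ε (1/2), by positivity, lt_of_le_of_lt (min_le_right _ _) (by norm_num), fun s hs => ?_⟩
  have := h2 (x := s) (lt_of_lt_of_le hs (min_le_left _ _))
  rw [dist_eq_norm] at this
  exact this.le

/-- the complete conclusion for a window -/
lemma BB_lim (a b : ℝ) (h : ℝ → ℂ) (hh : HLap h a b) (A B δ : ℝ) (hA : 0 ≤ A) (F : ℝ → ℝ)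
    (hF : IsWin A B F) (hδ : ∀ s, A < s → s < B → ‖h s - h 1‖ ≤ δ) :
    ∃ K, ‖K - h 1‖ ≤ δ ∧ Tendsto (fun N => BB F a b N / (WW F N : ℂ)) atTop (𝓝 K) :=
  avg_lim A B δ hA F hF _ h (h 1) hh.1 (kar_phi a b h hh F hF.1) hδ

lemma AA_lim (h : ℝ → ℂ) (hh : HLap h 0 0) (A B δ : ℝ) (hA : 0 ≤ A) (F : ℝ → ℝ)
    (hF : IsWin A B F) (hδ : ∀ s, A < s → s < B → ‖h s - h 1‖ ≤ δ) :
    ∃ K : ℝ, |K - (h 1).re| ≤ δ ∧ Tendsto (fun N => AA F N / WW F N) atTop (𝓝 K) := by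
  obtain ⟨K, h1, h2⟩ := BB_lim 0 0 h hh A B δ hA F hF hδ
  refine ⟨K.re, ?_, ?_⟩
  · rw [← Complex.sub_re]; exact (Complex.abs_re_le_norm _).trans h1
  · refine ((Complex.continuous_re.tendsto _).comp h2).congr fun N => ?_
    simp only [Function.comp, ← AA_eq]
    rw [← Complex.ofReal_div, Complex.ofReal_re]

/-- rescaled survival probability -/
noncomputable def xx (N : ℕ) : ℝ := √√(N:ℝ) * sv N

lemma xx_nu (N : ℕ) (hN : 0 < N) : xx N * (1/(N:ℝ)) = nu N * sv N := by
  unfold xx nu; ring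

lemma nu_sv_bdd (N n : ℕ) : |nu N * sv n| ≤ nu N := by
  have := sv_nonneg n
  have := nu_nonneg N
  have := sv_le_one n
  rw [abs_of_nonneg (by positivity)]
  nlinarith

lemma xx_le (A B : ℝ) (hB : B ≤ 1) (F : ℝ → ℝ) (hF : IsWin A B F) (N : ℕ) (hN : 0 < N) :
    xx N * WW F N ≤ AA F N := by
  unfold WW AA
  rw [← tsum_mul_left]
  have hs1 := (wt_summ F hF.1 N hN (fun _ => 1/(N:ℝ)) _ (fun _ => le_rfl)).mul_left (xx N)
  have hs2 := (wt_summ F hF.1 N hN (fun n => nu N * sv n) _ (nu_sv_bdd N))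
  refine hs1.tsum_le_tsum (fun n => ?_) hs2
  have e : xx N * (wt F N n * (1/(N:ℝ))) = wt F N n * (nu N * sv N) := by
    rw [← xx_nu N hN]; ring
  rw [e]
  by_cases hw : wt F N n = 0
  · simp [hw]
  have h1 := (wt_supp A B F hF N n hN hw).2
  have hN' : (0:ℝ) < N := by exact_mod_cast hN
  have h2 : (n:ℝ) ≤ N := by nlinarith
  have h3 : n ≤ N := by exact_mod_cast h2
  have := wt_nonneg A B F hF N n
  have := nu_nonneg N
  have := sv_anti h3
  gcongr

lemma le_xx (A B : ℝ) (hA : 1 ≤ A) (F : ℝ → ℝ) (hF : IsWin A B F) (N : ℕ) (hN : 0 < N) :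
    AA F N ≤ xx N * WW F N := by
  unfold WW AA
  rw [← tsum_mul_left]
  have hs1 := (wt_summ F hF.1 N hN (fun _ => 1/(N:ℝ)) _ (fun _ => le_rfl)).mul_left (xx N)
  have hs2 := (wt_summ F hF.1 N hN (fun n => nu N * sv n) _ (nu_sv_bdd N))
  refine hs2.tsum_le_tsum (fun n => ?_) hs1
  have e : xx N * (wt F N n * (1/(N:ℝ))) = wt F N n * (nu N * sv N) := by
    rw [← xx_nu N hN]; ring
  rw [e]
  by_cases hw : wt F N n = 0
  · simp [hw]
  have h1 := (wt_supp A B F hF N n hN hw).1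
  have hN' : (0:ℝ) < N := by exact_mod_cast hN
  have h2 : (N:ℝ) ≤ n := by nlinarith
  have h3 : N ≤ n := by exact_mod_cast h2
  have := wt_nonneg A B F hF N n
  have := nu_nonneg N
  have := sv_anti h3
  gcongr

lemma xx_lim (h : ℝ → ℂ) (hh : HLap h 0 0) : Tendsto xx atTop (𝓝 (h 1).re) := by
  rw [Metric.tendsto_nhds]
  intro η hη
  obtain ⟨ε, he0, he1, hε⟩ := near h hh.2.1 (η/2) (by linarith)
  obtain ⟨F, hF⟩ := exists_win (1-ε) 1 (by linarith) (by linarith)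
  obtain ⟨G, hG⟩ := exists_win 1 (1+ε) (by linarith) (by linarith)
  obtain ⟨K, hK1, hK2⟩ := AA_lim h hh (1-ε) 1 (η/2) (by linarith) F hF (fun s h1 h2 => hε s (by
    rw [abs_lt]; constructor <;> linarith))
  obtain ⟨K', hK1', hK2'⟩ := AA_lim h hh 1 (1+ε) (η/2) (by linarith) G hG (fun s h1 h2 => hε s (by
    rw [abs_lt]; constructor <;> linarith))
  have h1 := hK2.eventually (gt_mem_nhds (show K < K + η/2 by linarith))
  have h2 := hK2'.eventually (lt_mem_nhds (show K' - η/2 < K' by linarith))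
  filter_upwards [h1, h2, eventually_gt_atTop 0, WW_pos _ _ F hF, WW_pos _ _ G hG] with N h1 h2 hN hWF hWG
  have h3 := xx_le (1-ε) 1 le_rfl F hF N hN
  have h4 := le_xx 1 (1+ε) le_rfl G hG N hN
  rw [← le_div_iff₀ hWF] at h3
  rw [← div_le_iff₀ hWG] at h4
  rw [Real.dist_eq, abs_lt]
  rw [abs_le] at hK1 hK1'
  constructor <;> linarith [hK1.1, hK1.2, hK1'.1, hK1'.2]

lemma phi_diff (a b : ℝ) (m : ℕ) : ∀ k, ‖L (m+k) (ch a b) - L m (ch a b)‖ ≤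
    (sv m - sv (m+k)) + k * (1 - cc a b) * sv m := by
  have hc : cc a b ≤ 1 := by unfold cc; linarith [Real.cos_le_one a, Real.cos_le_one b]
  intro k
  induction k with
  | zero => simp
  | succ k ih =>
    have h1 := phi_succ (m+k) a b
    have h2 := R_norm_le (m+k) (ch a b) (fun p => (ch_norm _ _ p).le)
    have h3 := L_norm_le (m+k) (ch a b) (fun p => (ch_norm _ _ p).le)
    have h4 := sv_anti (show m ≤ m+k by omega)
    have e : L (m+(k+1)) (ch a b) - L m (ch a b) = (L (m+k) (ch a b) - L m (ch a b))
        - ((1 - cc a b : ℝ):ℂ) * L (m+k) (ch a b) - R (m+k) (ch a b) := by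
      rw [← add_assoc, h1]; push_cast; ring
    rw [e]
    refine (norm_sub_le _ _).trans ?_
    have h5 := norm_sub_le (L (m+k) (ch a b) - L m (ch a b)) (((1 - cc a b : ℝ):ℂ) * L (m+k) (ch a b))
    have h6 : ‖((1 - cc a b : ℝ):ℂ) * L (m+k) (ch a b)‖ ≤ (1 - cc a b) * sv m := by
      rw [norm_mul, Complex.norm_real, Real.norm_of_nonneg (by linarith)]
      exact mul_le_mul_of_nonneg_left (h3.trans h4) (by linarith)
    rw [← add_assoc]
    rw [show ((k+1:ℕ):ℝ) = (k:ℝ) + 1 by push_cast; rfl]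
    linarith

lemma one_sub_cc (a b : ℝ) (N : ℕ) (hN : 0 < N) : 1 - cc (a/√N) (b/√N) ≤ (a^2+b^2)/4/N := by
  have h1 := Real.one_sub_sq_div_two_le_cos (x := a/√N)
  have h2 := Real.one_sub_sq_div_two_le_cos (x := b/√N)
  rw [div_pow, Real.sq_sqrt (Nat.cast_nonneg N)] at h1 h2
  unfold cc
  have : (a^2+b^2)/4/N = (a^2/N/2 + b^2/N/2)/2 := by ring
  rw [this]; linarith

lemma BB_bound (a b ε : ℝ) (he : 0 < ε) (F : ℝ → ℝ) (hF : IsWin (1-ε) 1 F) (N : ℕ) (hN : 0 < N) :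
    ‖BB F a b N - (√√(N:ℝ) * L N (ch (a/√N) (b/√N))) * WW F N‖ ≤
      (1 + (a^2+b^2)/4*ε) * AA F N - xx N * WW F N := by
  have hN' : (0:ℝ) < N := by exact_mod_cast hN
  have hs1 := (wt_summ F hF.1 N hN (fun _ => 1/(N:ℝ)) _ (fun _ => le_rfl))
  have hs2 := (wt_summ F hF.1 N hN (fun n => nu N * sv n) _ (nu_sv_bdd N))
  have hs3 : Summable (fun n => (wt F N n : ℂ) * ((nu N : ℂ) * L n (ch (a/√N) (b/√N)))) := by
    refine Summable.of_norm_bounded hs2 fun n => ?_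
    rw [norm_mul, norm_mul, Complex.norm_real, Complex.norm_real, Real.norm_of_nonneg (nu_nonneg N),
      Real.norm_of_nonneg (wt_nonneg _ _ F hF N n)]
    have := L_norm_le n (ch (a/√N) (b/√N)) (fun p => (ch_norm _ _ p).le)
    have := nu_nonneg N
    have := wt_nonneg _ _ F hF N n
    gcongr
  have hs4 : Summable (fun n => (√√(N:ℝ) * L N (ch (a/√N) (b/√N)) : ℂ) * ((wt F N n * (1/(N:ℝ)) : ℝ) : ℂ)) :=
    (Complex.ofRealCLM.summable hs1).mul_left (√√(N:ℝ) * L N (ch (a/√N) (b/√N)))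
  have hs5 := (hs2.mul_left (1 + (a^2+b^2)/4*ε)).sub (hs1.mul_left (xx N))
  unfold BB WW AA
  rw [Complex.ofReal_tsum, ← tsum_mul_left, ← hs3.tsum_sub hs4, ← tsum_mul_left, ← tsum_mul_left,
    ← (hs2.mul_left (1 + (a^2+b^2)/4*ε)).tsum_sub (hs1.mul_left (xx N))]
  refine tsum_of_norm_bounded hs5.hasSum fun n => ?_
  have e1 : xx N * (wt F N n * (1/(N:ℝ))) = wt F N n * (nu N * sv N) := by
    rw [← xx_nu N hN]; ring
  have e2 : (wt F N n : ℂ) * ((nu N : ℂ) * L n (ch (a/√N) (b/√N))) - 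
      (√√(N:ℝ) * L N (ch (a/√N) (b/√N))) * ((wt F N n * (1/(N:ℝ)) : ℝ) : ℂ)
      = -((wt F N n * nu N : ℝ) : ℂ) * (L N (ch (a/√N) (b/√N)) - L n (ch (a/√N) (b/√N))) := by
    simp only [nu]; push_cast; ring
  rw [e1]
  refine (le_of_eq (congrArg norm e2)).trans ?_
  have hw := wt_nonneg _ _ F hF N n
  have hnu := nu_nonneg N
  rw [norm_mul, norm_neg, Complex.norm_real, Real.norm_of_nonneg (by positivity)]
  by_cases hw0 : wt F N n = 0
  · simp [hw0]
  have h1 := wt_supp _ _ F hF N n hN hw0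
  have h3 : n ≤ N := by
    have : (n:ℝ) ≤ N := by linarith [h1.2]
    exact_mod_cast this
  obtain ⟨k, rfl⟩ := Nat.exists_eq_add_of_le h3
  have hd := phi_diff (a/√(n+k:ℕ)) (b/√(n+k:ℕ)) n k
  have h4 := one_sub_cc a b (n+k) hN
  have h5 : (k:ℝ) * (1 - cc (a/√(n+k:ℕ)) (b/√(n+k:ℕ))) ≤ (a^2+b^2)/4 * ε := by
    calc (k:ℝ) * (1 - cc (a/√(n+k:ℕ)) (b/√(n+k:ℕ))) ≤ (ε * (n+k:ℕ)) * ((a^2+b^2)/4/(n+k:ℕ)) := by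
          have : (k:ℝ) ≤ ε * (n+k:ℕ) := by
            have := h1.1; push_cast at this ⊢; linarith
          have : 0 ≤ (a^2+b^2)/4/(n+k:ℕ) := by positivity
          calc (k:ℝ) * (1 - cc (a/√(n+k:ℕ)) (b/√(n+k:ℕ))) ≤ k * ((a^2+b^2)/4/(n+k:ℕ)) := by gcongr
            _ ≤ _ := by gcongr
      _ = _ := by field_simp
  have h6 : ‖L (n+k) (ch (a/√(n+k:ℕ)) (b/√(n+k:ℕ))) - L n (ch (a/√(n+k:ℕ)) (b/√(n+k:ℕ)))‖ ≤
      (1 + (a^2+b^2)/4*ε) * sv n - sv (n+k) := by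
    have := mul_le_mul_of_nonneg_right h5 (sv_nonneg n)
    linarith
  calc _ ≤ wt F (n+k) n * nu (n+k) * ((1 + (a^2+b^2)/4*ε) * sv n - sv (n+k)) := by gcongr
    _ = _ := by ring

theorem fix_lim (a b : ℝ) (h0 h : ℝ → ℂ) (hh0 : HLap h0 0 0) (hh : HLap h a b) :
    Tendsto (fun N : ℕ => (√√(N:ℝ) * L N (ch (a/√N) (b/√N)) : ℂ)) atTop (𝓝 (h 1)) := by
  rw [Metric.tendsto_nhds]
  intro η hη
  set C := (a^2+b^2)/4 with hC
  have hC0 : 0 ≤ C := by positivity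
  set H := (h0 1).re with hH
  set D := 1 + C + C * (|H| + 1) with hD
  have hD1 : 1 ≤ D := by have := abs_nonneg H; nlinarith [mul_nonneg hC0 (by linarith : 0 ≤ |H| + 1)]
  -- the tolerance
  set δ := min 1 (η / (8 * D)) with hδ
  have hδ0 : 0 < δ := by positivity
  have hδ1 : δ ≤ 1 := min_le_left _ _
  have hδD : δ * D ≤ η / 8 := by
    calc δ * D ≤ η / (8 * D) * D := by gcongr; exact min_le_right _ _
      _ = η/8 := by field_simp
  have hδη : δ ≤ η / 8 := by nlinarith
  obtain ⟨ε1, he0, he1, hε1⟩ := near h0 hh0.2.1 δ hδ0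
  obtain ⟨ε2, he0', he1', hε2⟩ := near h hh.2.1 δ hδ0
  set ε := min δ (min ε1 ε2) with hε
  have hε0 : 0 < ε := by positivity
  have hεδ : ε ≤ δ := min_le_left _ _
  have hεa : ε ≤ ε1 := (min_le_right _ _).trans (min_le_left _ _)
  have hεb : ε ≤ ε2 := (min_le_right _ _).trans (min_le_right _ _)
  obtain ⟨F, hF⟩ := exists_win (1-ε) 1 (by linarith) (by linarith)
  obtain ⟨K, hK1, hK2⟩ := AA_lim h0 hh0 (1-ε) 1 δ (by linarith) F hF (fun s h1 h2 => hε1 s (by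
    rw [abs_lt]; constructor <;> linarith))
  obtain ⟨K', hK1', hK2'⟩ := BB_lim a b h hh (1-ε) 1 δ (by linarith) F hF (fun s h1 h2 => hε2 s (by
    rw [abs_lt]; constructor <;> linarith))
  have l1 := ((hK2.const_mul (1 + C*ε)).sub (xx_lim h0 hh0)).eventually (gt_mem_nhds (lt_add_of_pos_right _ hδ0))
  have l2 := (Metric.tendsto_nhds.mp hK2') δ hδ0
  filter_upwards [l1, l2, eventually_gt_atTop 0, WW_pos _ _ F hF] with N l1 l2 hN hW
  have hb := BB_bound a b ε hε0 F hF N hN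
  set y : ℂ := √√(N:ℝ) * L N (ch (a/√N) (b/√N)) with hy
  have hWc : (WW F N : ℂ) ≠ 0 := by exact_mod_cast hW.ne'
  have hb2 : ‖BB F a b N / WW F N - y‖ ≤ (1 + C*ε) * (AA F N / WW F N) - xx N := by
    have e : BB F a b N / WW F N - y = (BB F a b N - y * WW F N) / WW F N := by field_simp
    rw [e, norm_div, Complex.norm_real, Real.norm_of_nonneg hW.le, div_le_iff₀ hW]
    refine hb.trans (le_of_eq ?_)
    rw [← hC]
    field_simp
  rw [dist_eq_norm] at l2 ⊢
  have t : y - h 1 = -(BB F a b N / WW F N - y) + (BB F a b N / WW F N - K') + (K' - h 1) := by ring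
  rw [t]
  have t1 := norm_add_le (-(BB F a b N / WW F N - y) + (BB F a b N / WW F N - K')) (K' - h 1)
  have t2 := norm_add_le (-(BB F a b N / WW F N - y)) (BB F a b N / WW F N - K')
  rw [norm_neg] at t2
  have t3 : (1 + C*ε) * K - H ≤ δ * D := by
    have hKH := (abs_le.mp hK1).2
    have hHa := le_abs_self H
    have : K ≤ |H| + 1 := by linarith
    have e1 : C * ε * K ≤ C * δ * (|H| + 1) := by
      calc C * ε * K ≤ C * ε * (|H| + 1) := by gcongr
        _ ≤ _ := by gcongr
    have : δ * D = δ + C * δ + C * δ * (|H|+1) := by rw [hD]; ring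
    have : 0 ≤ C * δ := by positivity
    linarith
  linarith

end SlitPf


namespace SlitPf
open Set Topology Filter MeasureTheory

/-- nonneg derivative FTC on `(0,∞)` with limits at both ends -/
lemma ftc_Ioi (f f' : ℝ → ℝ) (m0 m1 : ℝ) (hd : ∀ s, 0 < s → HasDerivAt f (f' s) s)
    (hp : ∀ s, 0 < s → 0 ≤ f' s) (h0 : Tendsto f (𝓝[>] 0) (𝓝 m0)) (h1 : Tendsto f atTop (𝓝 m1)) :
    IntegrableOn f' (Ioi 0) ∧ ∫ s in Ioi (0:ℝ), f' s = m1 - m0 := by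
  let g := Function.update f 0 m0
  have hc : ContinuousWithinAt g (Ici 0) 0 := by
    rw [continuousWithinAt_update_same]
    rwa [Ici_sdiff_left]
  have hdg : ∀ s ∈ Ioi (0:ℝ), HasDerivAt g (f' s) s := by
    intro s hs
    apply (hd s hs).congr_of_eventuallyEq
    filter_upwards [Ioi_mem_nhds hs] with x hx
    exact Function.update_of_ne (ne_of_gt hx) _ _
  have h1g : Tendsto g atTop (𝓝 m1) := by
    refine h1.congr' ?_
    filter_upwards [eventually_gt_atTop 0] with x hx
    exact (Function.update_of_ne (ne_of_gt hx) _ _).symm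
  refine ⟨integrableOn_Ioi_deriv_of_nonneg hc hdg hp h1g, ?_⟩
  rw [integral_Ioi_of_hasDerivAt_of_nonneg hc hdg hp h1g]
  simp [g]

/-- error function -/
noncomputable def GG (x : ℝ) : ℝ := ∫ t in (0:ℝ)..x, Real.exp (-1 * t^2)

lemma GG_deriv (x : ℝ) : HasDerivAt GG (Real.exp (-1 * x^2)) x := by
  have hc : Continuous (fun t : ℝ => Real.exp (-1 * t^2)) := by fun_prop
  exact intervalIntegral.integral_hasDerivAt_right (hc.intervalIntegrable _ _)
    (hc.stronglyMeasurableAtFilter _ _) hc.continuousAt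

lemma GG_top : Tendsto GG atTop (𝓝 (√Real.pi / 2)) := by
  have := intervalIntegral_tendsto_integral_Ioi (f := fun t : ℝ => Real.exp (-1 * t^2)) (μ := volume) 0
    (integrable_exp_neg_mul_sq one_pos).integrableOn tendsto_id
  rw [integral_gaussian_Ioi, div_one] at this
  exact this

lemma GG_odd (x : ℝ) : GG (-x) = - GG x := by
  unfold GG
  have := intervalIntegral.integral_comp_neg (a := 0) (b := x) (fun t : ℝ => Real.exp (-1 * t^2))
  simp only [neg_sq, neg_zero] at this
  rw [this, intervalIntegral.integral_symm]

lemma GG_bot : Tendsto GG atBot (𝓝 (-(√Real.pi / 2))) := by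
  have := (GG_top.comp tendsto_neg_atBot_atTop).neg
  refine this.congr fun x => ?_
  simp [GG_odd]

/-- the elementary Laplace transform -/
lemma sint (l r : ℝ) (hl : 0 < l) (hr : 0 < r) :
    IntegrableOn (fun s => Real.exp (-(l*s)) * ((s*√s)⁻¹ * Real.exp (-(r^2/s)))) (Ioi 0) ∧
    ∫ s in Ioi (0:ℝ), Real.exp (-(l*s)) * ((s*√s)⁻¹ * Real.exp (-(r^2/s))) =
      √Real.pi / r * Real.exp (-(2*√l*r)) := by
  have hk : 0 < √l := Real.sqrt_pos.mpr hl
  set k := √l with hkd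
  have hkl : k^2 = l := Real.sq_sqrt hl.le
  let f : ℝ → ℝ := fun s => Real.exp (-(2*k*r)) / r * 
    (GG (k * √s - r / √s) - Real.exp (4*k*r) * GG (k * √s + r / √s))
  have hsq : Tendsto (fun s => √s) (𝓝[>] 0) (𝓝[>] 0) := by
    apply tendsto_nhdsWithin_of_tendsto_nhds_of_eventually_within
    · have : Tendsto (fun s => √s) (𝓝 0) (𝓝 (√0)) := Real.continuous_sqrt.tendsto 0
      rw [Real.sqrt_zero] at this
      exact this.mono_left nhdsWithin_le_nhds
    · filter_upwards [self_mem_nhdsWithin] with s hs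
      exact Real.sqrt_pos.mpr hs
  have hinv : Tendsto (fun s => r / √s) (𝓝[>] 0) atTop := by
    simp only [div_eq_mul_inv]
    exact (tendsto_inv_nhdsGT_zero.comp hsq).const_mul_atTop hr
  have hk0 : Tendsto (fun s => k * √s) (𝓝[>] 0) (𝓝 0) := by
    have := (hsq.mono_right nhdsWithin_le_nhds).const_mul k
    simpa using this
  have hkt : Tendsto (fun s => k * √s) atTop atTop := Real.tendsto_sqrt_atTop.const_mul_atTop hk
  have hit : Tendsto (fun s => r / √s) atTop (𝓝 0) := Real.tendsto_sqrt_atTop.const_div_atTop r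
  have h0 : Tendsto f (𝓝[>] 0) (𝓝 (Real.exp (-(2*k*r)) / r * 
      (-(√Real.pi/2) - Real.exp (4*k*r) * (√Real.pi/2)))) := by
    refine Tendsto.const_mul _ (Tendsto.sub (GG_bot.comp ?_) (Tendsto.const_mul _ (GG_top.comp ?_)))
    · simp only [sub_eq_add_neg]
      exact hk0.add_atBot (tendsto_neg_atTop_atBot.comp hinv)
    · exact hk0.add_atTop hinv
  have h1 : Tendsto f atTop (𝓝 (Real.exp (-(2*k*r)) / r * 
      ((√Real.pi/2) - Real.exp (4*k*r) * (√Real.pi/2)))) := by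
    refine Tendsto.const_mul _ (Tendsto.sub (GG_top.comp ?_) (Tendsto.const_mul _ (GG_top.comp ?_)))
    · simp only [sub_eq_add_neg]
      exact hkt.atTop_add hit.neg
    · exact hkt.atTop_add hit
  have hd : ∀ s, 0 < s → HasDerivAt f (Real.exp (-(l*s)) * ((s*√s)⁻¹ * Real.exp (-(r^2/s)))) s := by
    intro s hs
    have hss : 0 < √s := Real.sqrt_pos.mpr hs
    have hs2 : √s^2 = s := Real.sq_sqrt hs.le
    have d1 := Real.hasDerivAt_sqrt hs.ne'
    have d2 := d1.const_mul k
    have d3 := (d1.inv hss.ne').const_mul r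
    have d4 := (GG_deriv (k * √s - r / √s)).comp s (d2.sub d3)
    have d5 := (GG_deriv (k * √s + r / √s)).comp s (d2.add d3)
    have d6 := (d4.sub (d5.const_mul (Real.exp (4*k*r)))).const_mul (Real.exp (-(2*k*r)) / r)
    refine HasDerivAt.congr_deriv (f := f) d6 ?_
    have e1 : Real.exp (-1 * (k * √s - r / √s)^2) = 
        Real.exp (-(l*s)) * Real.exp (-(r^2/s)) * Real.exp (2*k*r) := by
      rw [← Real.exp_add, ← Real.exp_add]; congr 1
      rw [← hkl]
      have : (k * √s - r / √s)^2 = k^2*√s^2 + r^2/√s^2 - 2*k*r := by field_simp; ring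
      rw [this, hs2]; ring
    have e2 : Real.exp (-1 * (k * √s + r / √s)^2) = 
        Real.exp (-(l*s)) * Real.exp (-(r^2/s)) * Real.exp (-(2*k*r)) := by
      rw [← Real.exp_add, ← Real.exp_add]; congr 1
      rw [← hkl]
      have : (k * √s + r / √s)^2 = k^2*√s^2 + r^2/√s^2 + 2*k*r := by field_simp; ring
      rw [this, hs2]; ring
    have e3 : Real.exp (4*k*r) = Real.exp (2*k*r) * Real.exp (2*k*r) := by
      rw [← Real.exp_add]; congr 1; ring
    have e4 : Real.exp (-(2*k*r)) * Real.exp (2*k*r) = 1 := by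
      rw [← Real.exp_add]; simp
    rw [e1, e2, e3]
    have e5 : (s * √s)⁻¹ = 1/√s^3 := by
      nth_rewrite 1 [← hs2]
      field_simp
    rw [e5, hs2]
    generalize Real.exp (-(l*s)) = X at *
    generalize Real.exp (-(r^2/s)) = Y at *
    generalize Real.exp (2*k*r) = P at *
    generalize Real.exp (-(2*k*r)) = Q at *
    have : Q / r * (X * Y * P * (k * (1 / (2 * √s)) - r * (-(1 / (2 * √s)) / s)) -
        P * P * (X * Y * Q * (k * (1 / (2 * √s)) + r * (-(1 / (2 * √s)) / s)))) = 
        (Q * P) * (X * Y) / r * ((k * (1 / (2 * √s)) - r * (-(1 / (2 * √s)) / s)) 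
         - (Q * P) * (k * (1 / (2 * √s)) + r * (-(1 / (2 * √s)) / s))) := by ring
    rw [this, e4]
    have e6 : 1 / √s^3 = 1 / (√s * s) := by
      rw [pow_succ' (√s) 2, hs2]
    rw [e6]
    field_simp
    ring
  obtain ⟨i1, i2⟩ := ftc_Ioi f _ _ _ hd (fun s hs => by positivity) h0 h1
  refine ⟨i1, ?_⟩
  rw [i2]
  field_simp
  ring

end SlitPf


namespace SlitPf
open Set Topology Filter MeasureTheory

/-- Euclidean norm on `ℝ × ℝ` -/
noncomputable def rho (q : ℝ × ℝ) : ℝ := √(q.1^2 + q.2^2)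

/-- parabolic coordinates -/
def par (p : ℝ × ℝ) : ℝ × ℝ := (p.1^2 - p.2^2, 2 * p.1 * p.2)

/-- the derivative of `par` -/
noncomputable def parD (p : ℝ × ℝ) : ℝ × ℝ →L[ℝ] ℝ × ℝ :=
  (Matrix.toLin (.finTwoProd ℝ) (.finTwoProd ℝ)
    !![2 * p.1, -(2 * p.2); 2 * p.2, 2 * p.1]).toContinuousLinearMap

lemma parD_hasFDerivAt (p : ℝ × ℝ) : HasFDerivAt par (parD p) p := by
  unfold parD
  rw [Matrix.toLin_finTwoProd_toContinuousLinearMap]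
  have h1 : HasFDerivAt (fun p : ℝ × ℝ => p.1) (ContinuousLinearMap.fst ℝ ℝ ℝ) p := hasFDerivAt_fst
  have h2 : HasFDerivAt (fun p : ℝ × ℝ => p.2) (ContinuousLinearMap.snd ℝ ℝ ℝ) p := hasFDerivAt_snd
  refine HasFDerivAt.congr_fderiv (HasFDerivAt.prodMk ((h1.pow 2).sub (h2.pow 2)) ((h1.const_mul 2).mul h2)) ?_
  ext <;> simp [mul_comm]

lemma parD_det (p : ℝ × ℝ) : (parD p).det = 4 * (p.1^2 + p.2^2) := by
  unfold parD
  simp only [LinearMap.det_toContinuousLinearMap, LinearMap.det_toLin,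
    Matrix.det_fin_two_of]
  ring

/-- right half plane -/
def HP : Set (ℝ × ℝ) := Ioi 0 ×ˢ univ

lemma HP_meas : MeasurableSet HP := measurableSet_Ioi.prod MeasurableSet.univ

lemma rho_par (p : ℝ × ℝ) : rho (par p) = p.1^2 + p.2^2 := by
  unfold rho par
  simp only
  rw [show (p.1^2 - p.2^2)^2 + (2*p.1*p.2)^2 = (p.1^2+p.2^2)^2 by ring]
  exact Real.sqrt_sq (by positivity)

lemma par_inj : InjOn par HP := by
  rintro ⟨u, v⟩ hp ⟨u', v'⟩ hp' h
  simp only [HP, mem_prod, mem_Ioi, mem_univ, and_true] at hp hp'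
  have h0 := congrArg rho h
  rw [rho_par, rho_par] at h0
  simp only [par, Prod.mk.injEq] at h h0
  have h1 : u^2 = u'^2 := by linarith [h.1]
  have h2 : u = u' := by nlinarith
  subst h2
  have : v = v' := by
    have := h.2
    have h3 : (2*u) * v = (2*u) * v' := by linarith
    exact mul_left_cancel₀ (by positivity) h3
  rw [this]

lemma rho_sq (q : ℝ × ℝ) : rho q ^ 2 = q.1^2 + q.2^2 := Real.sq_sqrt (by positivity)
lemma rho_nonneg (q : ℝ × ℝ) : 0 ≤ rho q := Real.sqrt_nonneg _
lemma abs_le_rho (q : ℝ × ℝ) : |q.1| ≤ rho q := by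
  apply Real.le_sqrt_of_sq_le; rw [sq_abs]; nlinarith [sq_nonneg q.2]
lemma add_rho_nonneg (q : ℝ × ℝ) : 0 ≤ q.1 + rho q := by
  have := abs_le_rho q; have := neg_abs_le q.1; linarith
lemma rho_cont : Continuous rho := by unfold rho; fun_prop

lemma par_image : par '' HP = polarCoord.source := by
  ext ⟨x, y⟩
  simp only [polarCoord_source, mem_image, HP, mem_prod, mem_Ioi, mem_univ, and_true, mem_union,
    mem_ofPred_eq]
  constructor
  · rintro ⟨⟨u, v⟩, hu, h⟩
    simp only [par, Prod.mk.injEq] at h hu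
    by_cases hv : v = 0
    · left; rw [← h.1, hv]; simp; positivity
    · right; rw [← h.2]; positivity
  · intro h
    have hr := rho_sq (x, y)
    have hr0 := rho_nonneg (x, y)
    simp only at hr h
    set r := rho (x, y) with hrd
    have hpos : 0 < x + r := by
      rcases h with h | h
      · linarith
      · have : x^2 < r^2 := by have := sq_pos_of_ne_zero h; linarith
        have := abs_lt_of_sq_lt_sq this hr0
        linarith [(abs_lt.mp this).1]
    have hu : 0 < √((x+r)/2) := Real.sqrt_pos.mpr (by linarith)
    have hu2 : √((x+r)/2)^2 = (x+r)/2 := Real.sq_sqrt (by linarith)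
    refine ⟨(√((x+r)/2), y / (2 * √((x+r)/2))), hu, ?_⟩
    simp only [par, Prod.mk.injEq]
    constructor
    · rw [div_pow, mul_pow, hu2]
      field_simp
      nlinarith
    · field_simp

lemma plane_int (g : ℝ × ℝ → ℂ) : ∫ q, g q = ∫ p in HP, (4 * (p.1^2 + p.2^2)) • g (par p) := by
  rw [← setIntegral_univ, ← setIntegral_congr_set polarCoord_source_ae_eq_univ, ← par_image,
    integral_image_eq_integral_abs_det_fderiv_smul volume HP_meas
      (fun p _ => (parD_hasFDerivAt p).hasFDerivWithinAt) par_inj]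
  congr 1; ext p
  rw [parD_det, abs_of_nonneg (by positivity)]

lemma plane_integrable (g : ℝ × ℝ → ℂ) : Integrable g ↔ 
    IntegrableOn (fun p => (4 * (p.1^2 + p.2^2)) • g (par p)) HP := by
  rw [← integrableOn_univ, ← integrableOn_congr_set_ae polarCoord_source_ae_eq_univ, ← par_image,
    integrableOn_image_iff_integrableOn_abs_det_fderiv_smul volume HP_meas
      (fun p _ => (parD_hasFDerivAt p).hasFDerivWithinAt) par_inj]
  have : ∀ p, |(parD p).det| = 4 * (p.1^2 + p.2^2) := fun p => by
    rw [parD_det, abs_of_nonneg (by positivity)]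
  simp only [this]

/-- the phase -/
noncomputable def ph (a b : ℝ) (q : ℝ × ℝ) : ℂ := Complex.exp (Complex.I * (a * q.1 + b * q.2))

lemma ph_norm (a b : ℝ) (q : ℝ × ℝ) : ‖ph a b q‖ = 1 := by
  have : ph a b q = Complex.exp (((a * q.1 + b * q.2 : ℝ) : ℂ) * Complex.I) := by
    simp [ph, mul_comm]
  rw [this, Complex.norm_exp_ofReal_mul_I]

lemma ph_cont (a b : ℝ) : Continuous (ph a b) := by unfold ph; fun_prop

/-- integrand after integrating out time -/
noncomputable def Jf (a b k : ℝ) (q : ℝ × ℝ) : ℂ :=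
  ph a b q * ((1 / rho q * Real.exp (-(k * rho q)) * √(q.1 + rho q) : ℝ) : ℂ)

lemma Jf_par (a b k : ℝ) (p : ℝ × ℝ) (hp : p ∈ HP) : (4 * (p.1^2 + p.2^2)) • Jf a b k (par p) = 
    (4 * √2 : ℝ) * ((p.1 : ℂ) * Complex.exp (-(k + Complex.I * a) * p.2^2 + 
      (2 * Complex.I * b * p.1) * p.2 + (-(k - Complex.I * a) * p.1^2))) := by
  have hu : 0 < p.1 := hp.1
  have hr : 0 < p.1^2 + p.2^2 := by positivity
  have h1 : √((par p).1 + rho (par p)) = √2 * p.1 := by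
    rw [rho_par]
    simp only [par]
    rw [show p.1^2 - p.2^2 + (p.1^2+p.2^2) = 2 * p.1^2 by ring, Real.sqrt_mul (by norm_num),
      Real.sqrt_sq hu.le]
  unfold Jf
  rw [h1, rho_par, Complex.real_smul]
  have h2 : Complex.exp (-(k + Complex.I * a) * p.2^2 + 
      (2 * Complex.I * b * p.1) * p.2 + (-(k - Complex.I * a) * p.1^2)) =
      ph a b (par p) * (Real.exp (-(k * (p.1^2+p.2^2))) : ℂ) := by
    unfold ph par
    push_cast
    rw [← Complex.exp_add]; congr 1; ring
  rw [h2]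
  have hr' : ((p.1:ℂ)^2 + (p.2:ℂ)^2) ≠ 0 := by exact_mod_cast hr.ne'
  push_cast
  field_simp

lemma pull_integrable (a b k : ℝ) (hk : 0 < k) : IntegrableOn (fun p : ℝ × ℝ => 
    ((p.1 : ℂ) * Complex.exp (-(k + Complex.I * a) * p.2^2 + 
      (2 * Complex.I * b * p.1) * p.2 + (-(k - Complex.I * a) * p.1^2)))) HP := by
  apply Integrable.integrableOn
  have h := (integrable_mul_exp_neg_mul_sq hk).mul_prod (integrable_exp_neg_mul_sq hk)
  rw [← Measure.volume_eq_prod] at h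
  refine h.mono (by fun_prop) (Eventually.of_forall fun p => ?_)
  rw [norm_mul, norm_mul, norm_mul, Complex.norm_real, Complex.norm_exp]
  rw [Real.norm_of_nonneg (Real.exp_pos _).le, Real.norm_of_nonneg (Real.exp_pos _).le, mul_assoc ‖p.1‖, ← Real.exp_add]
  apply le_of_eq; congr 2
  have : (-(k + Complex.I * a) * (p.2:ℂ)^2 + 
      (2 * Complex.I * b * p.1) * p.2 + (-(k - Complex.I * a) * (p.1:ℂ)^2)) = 
      ((-k * p.1^2 + -k * p.2^2 : ℝ) : ℂ) + ((-a * p.2^2 + 2*b*p.1*p.2 + a * p.1^2 : ℝ) : ℂ) * Complex.I := by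
    push_cast; ring
  rw [this]
  simp only [Complex.add_re, Complex.ofReal_re, Complex.re_ofReal_mul, Complex.I_re, mul_zero, add_zero]

lemma Jf_integrable (a b k : ℝ) (hk : 0 < k) : Integrable (Jf a b k) := by
  rw [plane_integrable, integrableOn_congr_fun (fun p hp => Jf_par a b k p hp) HP_meas]
  exact (pull_integrable a b k hk).const_mul _

lemma Jf_int (a b k : ℝ) (hk : 0 < k) : ∫ q, Jf a b k q = 
    (2 * √2 * √Real.pi : ℝ) * (k + Complex.I * a)^(1/2:ℂ) / ((k^2 + a^2 + b^2 : ℝ) : ℂ) := by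
  rw [plane_int, setIntegral_congr_fun HP_meas (fun p hp => Jf_par a b k p hp), integral_const_mul]
  have h := pull_integrable a b k hk
  unfold HP at h ⊢
  rw [Measure.volume_eq_prod] at h ⊢
  rw [setIntegral_prod _ h]
  set w : ℂ := k + Complex.I * a with hw
  have hwre : w.re = k := by simp [hw]
  have hw0 : w ≠ 0 := by intro h0; rw [h0] at hwre; simp at hwre; linarith
  set w' : ℂ := k - Complex.I * a with hw'
  have hww : w * w' = (k^2 + a^2 : ℝ) := by
    rw [hw, hw']; push_cast; ring_nf; rw [Complex.I_sq]; ring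
  set A : ℂ := w' + b^2 / w with hA
  have hAw : A * w = ((k^2 + a^2 + b^2 : ℝ) : ℂ) := by
    rw [hA, add_mul, div_mul_cancel₀ _ hw0, mul_comm, hww]; push_cast; ring
  have hA1 : A = ((k^2 + a^2 + b^2 : ℝ) : ℂ) / w := by rw [← hAw]; field_simp
  have hpos : 0 < k^2 + a^2 + b^2 := by positivity
  have hAre : 0 < A.re := by
    rw [hA1, Complex.div_re, Complex.ofReal_re, Complex.ofReal_im, hwre]
    have : 0 < Complex.normSq w := Complex.normSq_pos.mpr hw0
    rw [zero_mul, zero_div, add_zero]; positivity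
  have hin : ∀ u : ℝ, ∫ v in (univ : Set ℝ), ((u:ℂ) * Complex.exp (-w * v^2 + 
      (2 * Complex.I * b * u) * v + (-w' * u^2))) = 
      ((Real.pi / w : ℂ))^(1/2:ℂ) * (u * Complex.exp (-A * u^2)) := by
    intro u
    rw [setIntegral_univ, integral_const_mul, integral_cexp_quadratic (by simp [hwre, hk]), neg_neg]
    have : -w' * (u:ℂ)^2 - (2 * Complex.I * b * u)^2 / (4 * -w) = -A * u^2 := by
      rw [hA]; ring_nf; rw [Complex.I_sq]; ring
    rw [this]; ring
  simp only [hin]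
  rw [integral_const_mul, integral_mul_cexp_neg_mul_sq hAre]
  have harg : w.arg ≠ Real.pi := by
    intro h0
    rw [Complex.arg_eq_pi_iff] at h0
    linarith [h0.1]
  have e1 : ((Real.pi / w : ℂ))^(1/2:ℂ) = √Real.pi / w^(1/2:ℂ) := by
    rw [div_eq_mul_inv, real_mul_cpow Real.pi_pos, Complex.inv_cpow _ _ harg, div_eq_mul_inv]
    congr 1
    rw [Real.sqrt_eq_rpow, Complex.ofReal_cpow Real.pi_pos.le]
    norm_num
  have e2 : w^(1/2:ℂ) * w^(1/2:ℂ) = w := by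
    exact cpow_half_sq w
  have e3 : w^(1/2:ℂ) ≠ 0 := fun h0 => hw0 (by rw [← e2, h0, zero_mul])
  rw [e1, hA1]
  have hpos' : ((k^2 + a^2 + b^2 : ℝ) : ℂ) ≠ 0 := by exact_mod_cast hpos.ne'
  have e4 : (2 * (((k^2 + a^2 + b^2 : ℝ) : ℂ) / w))⁻¹ = w / (2 * ((k^2 + a^2 + b^2 : ℝ) : ℂ)) := by
    rw [mul_div_assoc', inv_div]
  rw [e4]
  nth_rewrite 2 [← e2]
  generalize ((k^2 + a^2 + b^2 : ℝ) : ℂ) = Z at *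
  push_cast
  field_simp
  ring

end SlitPf


namespace SlitPf
open Set Topology Filter MeasureTheory

/-- the kernel -/
noncomputable def Gk (a b s : ℝ) (q : ℝ × ℝ) : ℂ :=
  ph a b q * (((s*√s)⁻¹ * Real.exp (-(rho q^2/s)) * √(q.1 + rho q) : ℝ) : ℂ)

/-- the limit function -/
noncomputable def hf (a b s : ℝ) : ℂ := ((c0 * (√2 / Real.pi) : ℝ) : ℂ) * ∫ q, Gk a b s q

lemma Gk_eq (a b l s : ℝ) (q : ℝ × ℝ) : (Real.exp (-(l*s)) : ℂ) * Gk a b s q =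
    (ph a b q * (√(q.1 + rho q) : ℂ)) * 
      ((Real.exp (-(l*s)) * ((s*√s)⁻¹ * Real.exp (-(rho q^2/s))) : ℝ) : ℂ) := by
  unfold Gk; push_cast; ring

lemma slice (a b l : ℝ) (hl : 0 < l) (q : ℝ × ℝ) :
    IntegrableOn (fun s => (Real.exp (-(l*s)) : ℂ) * Gk a b s q) (Ioi 0) ∧
    ∫ s in Ioi (0:ℝ), (Real.exp (-(l*s)) : ℂ) * Gk a b s q = (√Real.pi : ℂ) * Jf a b (2*√l) q ∧
    ∫ s in Ioi (0:ℝ), ‖(Real.exp (-(l*s)) : ℂ) * Gk a b s q‖ = √Real.pi * ‖Jf a b (2*√l) q‖ := by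
  simp only [Gk_eq]
  rcases (rho_nonneg q).eq_or_lt with h0 | h0
  · have h1 : q.1 = 0 := by
      have := abs_le_rho q
      rw [← h0] at this
      exact abs_nonpos_iff.mp this
    have h2 : √(q.1 + rho q) = 0 := by rw [h1, ← h0]; simp
    have h3 : Jf a b (2*√l) q = 0 := by unfold Jf; rw [h2]; simp
    simp [h2, h3]
  · obtain ⟨i1, i2⟩ := sint l (rho q) hl h0
    refine ⟨?_, ?_, ?_⟩
    · exact i1.ofReal.const_mul _
    · rw [integral_const_mul, integral_complex_ofReal, i2]
      unfold Jf
      push_cast; ring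
    · simp only [norm_mul (ph a b q * _)]
      rw [integral_const_mul]
      have : ∫ s in Ioi (0:ℝ), ‖((Real.exp (-(l*s)) * ((s*√s)⁻¹ * Real.exp (-(rho q^2/s))) : ℝ) : ℂ)‖ =
          ∫ s in Ioi (0:ℝ), Real.exp (-(l*s)) * ((s*√s)⁻¹ * Real.exp (-(rho q^2/s))) := by
        refine setIntegral_congr_fun measurableSet_Ioi fun s hs => ?_
        have hs' : 0 < s := hs
        rw [Complex.norm_real]
        exact Real.norm_of_nonneg (by positivity)
      rw [this, i2]
      unfold Jf
      rw [norm_mul, norm_mul, ph_norm, Complex.norm_real, Complex.norm_real, one_mul, one_mul,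
        Real.norm_of_nonneg (Real.sqrt_nonneg _), Real.norm_of_nonneg (by positivity)]
      ring

lemma joint (a b l : ℝ) (hl : 0 < l) : Integrable
    (fun z : ℝ × (ℝ × ℝ) => (Real.exp (-(l*z.1)) : ℂ) * Gk a b z.1 z.2)
    ((volume.restrict (Ioi (0:ℝ))).prod volume) := by
  have hm : Measurable (fun z : ℝ × (ℝ × ℝ) => (Real.exp (-(l*z.1)) : ℂ) * Gk a b z.1 z.2) := by
    unfold Gk ph rho
    fun_prop
  rw [integrable_prod_iff' hm.aestronglyMeasurable]
  refine ⟨Eventually.of_forall fun q => (slice a b l hl q).1, ?_⟩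
  simp only [(slice a b l hl _).2.2]
  exact (Jf_integrable a b (2*√l) (by positivity)).norm.const_mul _

lemma hf_lap (a b l : ℝ) (hl : 0 < l) : ∫ s in Ioi (0:ℝ), (Real.exp (-(l*s)):ℂ) * hf a b s = 
    c0 * ((2*√l:ℝ) + Complex.I*a)^(1/2:ℂ) / ((l+(a^2+b^2)/4:ℝ):ℂ) := by
  have h1 : ∀ s, (Real.exp (-(l*s)):ℂ) * hf a b s = ((c0 * (√2 / Real.pi) : ℝ) : ℂ) *
      ∫ q, (Real.exp (-(l*s)):ℂ) * Gk a b s q := by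
    intro s; unfold hf; rw [integral_const_mul]; ring
  simp only [h1]
  rw [integral_const_mul, integral_integral_swap (joint a b l hl)]
  simp only [(slice a b l hl _).2.1]
  rw [integral_const_mul, Jf_int a b _ (by positivity)]
  have h2 : (((2*√l)^2 + a^2 + b^2 : ℝ) : ℂ) = 4 * ((l+(a^2+b^2)/4:ℝ):ℂ) := by
    rw [mul_pow, Real.sq_sqrt hl.le]; push_cast; ring
  rw [h2]
  have h3 : ((l+(a^2+b^2)/4:ℝ):ℂ) ≠ 0 := by
    have : 0 < l+(a^2+b^2)/4 := by positivity
    exact_mod_cast this.ne'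
  have h4 : (√2 : ℂ) * √2 = 2 := by
    rw [← Complex.ofReal_mul, Real.mul_self_sqrt (by norm_num)]; norm_num
  have h5 : (√Real.pi : ℂ) * √Real.pi = Real.pi := by
    rw [← Complex.ofReal_mul, Real.mul_self_sqrt Real.pi_pos.le]
  have h6 : (Real.pi : ℂ) ≠ 0 := by exact_mod_cast Real.pi_ne_zero
  generalize ((l+(a^2+b^2)/4:ℝ):ℂ) = Z at *
  generalize (((2*√l:ℝ):ℂ) + Complex.I*a)^(1/2:ℂ) = W at *
  push_cast
  have : (c0 * (√2 / Real.pi) * (√Real.pi * (2 * √2 * √Real.pi * W / (4 * Z))) : ℂ) = 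
    c0 * (((√2 : ℂ) * √2) * ((√Real.pi : ℂ) * √Real.pi) / Real.pi) * (2 * W / (4 * Z)) := by ring
  rw [this, h4, h5, mul_div_assoc, div_self h6]
  field_simp
  norm_num
  ring

lemma hf_int (a b : ℝ) : IntegrableOn (fun s => (Real.exp (-s):ℂ) * hf a b s) (Ioi 0) := by
  have h := (joint a b 1 one_pos).integral_prod_left.const_mul ((c0 * (√2 / Real.pi) : ℝ) : ℂ)
  refine h.congr (Eventually.of_forall fun s => ?_)
  simp only [one_mul]
  unfold hf; rw [integral_const_mul]; ring

lemma gauss_int (k : ℝ) (hk : 0 < k) : Integrable (fun q : ℝ × ℝ => Real.exp (-(k * rho q^2))) := by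
  have h := (integrable_exp_neg_mul_sq hk).mul_prod (integrable_exp_neg_mul_sq hk)
  rw [← Measure.volume_eq_prod] at h
  refine h.congr (Eventually.of_forall fun q => ?_)
  simp only
  rw [← Real.exp_add, rho_sq]; congr 1; ring

lemma sqrt_bd (q : ℝ × ℝ) : √(q.1 + rho q) ≤ 4 * Real.exp (1/4 * rho q^2) := by
  have h1 := abs_le_rho q
  have h2 := le_abs_self q.1
  have h3 := rho_nonneg q
  have h4 := Real.add_one_le_exp (1/4 * rho q^2)
  apply Real.sqrt_le_iff.mpr
  refine ⟨by positivity, ?_⟩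
  nlinarith [sq_nonneg (rho q - 1), sq_nonneg (rho q)]

lemma Gk_cont (a b s : ℝ) : Continuous (Gk a b s) := by
  have := ph_cont a b
  have := rho_cont
  unfold Gk; fun_prop

lemma Gk_bd (a b s : ℝ) (q : ℝ × ℝ) (hs : 1/2 ≤ s) (hs2 : s ≤ 2) :
    ‖Gk a b s q‖ ≤ 16 * Real.exp (-(1/4 * rho q^2)) := by
  have hs0 : 0 < s := by linarith
  have hq : 1/2 ≤ √s := Real.le_sqrt_of_sq_le (by linarith)
  unfold Gk
  rw [norm_mul, ph_norm, one_mul, Complex.norm_real, Real.norm_of_nonneg (by positivity)]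
  have h1 : (s*√s)⁻¹ ≤ 4 := by
    rw [inv_le_comm₀ (by positivity) (by norm_num)]; nlinarith
  have h2 : Real.exp (-(rho q^2/s)) ≤ Real.exp (-(1/2 * rho q^2)) := by
    apply Real.exp_le_exp.mpr
    have : rho q^2 * (1/2) ≤ rho q^2 * s⁻¹ := by
      apply mul_le_mul_of_nonneg_left _ (sq_nonneg _)
      rw [one_div, inv_le_inv₀ (by norm_num) hs0]; exact hs2
    rw [div_eq_mul_inv]; linarith
  calc _ ≤ 4 * Real.exp (-(1/2 * rho q^2)) * (4 * Real.exp (1/4 * rho q^2)) := by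
        gcongr; exact sqrt_bd q
    _ = 16 * Real.exp (-(1/4 * rho q^2)) := by
        rw [show -(1/4 * rho q^2) = -(1/2 * rho q^2) + 1/4 * rho q^2 by ring, Real.exp_add]; ring

lemma hf_contAt (a b : ℝ) : ContinuousAt (hf a b) 1 := by
  unfold hf
  apply ContinuousAt.mul continuousAt_const
  refine continuousAt_of_dominated (bound := fun q => 16 * Real.exp (-(1/4 * rho q^2))) ?_ ?_ ?_ ?_
  · exact Eventually.of_forall fun s => (Gk_cont a b s).aestronglyMeasurable
  · filter_upwards [Icc_mem_nhds (show (1/2:ℝ) < 1 by norm_num) (show (1:ℝ) < 2 by norm_num)] with s hs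
    exact Eventually.of_forall fun q => Gk_bd a b s q hs.1 hs.2
  · exact (gauss_int _ (by norm_num)).const_mul _
  · refine Eventually.of_forall fun q => ?_
    unfold Gk
    apply ContinuousAt.mul continuousAt_const
    apply Complex.continuous_ofReal.continuousAt.comp
    apply ContinuousAt.mul _ continuousAt_const
    have h1 : (1:ℝ) * √1 ≠ 0 := by simp
    have h2 : (1:ℝ) ≠ 0 := by simp
    fun_prop (disch := assumption)

lemma hf_HLap (a b : ℝ) : HLap (hf a b) a b :=
  ⟨hf_int a b, hf_contAt a b, fun l hl => hf_lap a b l hl⟩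

end SlitPf


namespace SlitPf
open Set Topology Filter MeasureTheory

/-- unnormalised density -/
noncomputable def wd (q : ℝ × ℝ) : ℝ := Real.exp (-rho q^2) * √(q.1 + rho q)

lemma wd_cont : Continuous wd := by
  have := rho_cont
  unfold wd; fun_prop

lemma wd_nonneg (q : ℝ × ℝ) : 0 ≤ wd q := by unfold wd; positivity

lemma wd_int : Integrable wd := by
  refine ((gauss_int (3/4) (by norm_num)).const_mul 4).mono wd_cont.aestronglyMeasurable
    (Eventually.of_forall fun q => ?_)
  rw [Real.norm_of_nonneg (wd_nonneg q), Real.norm_of_nonneg (by positivity)]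
  unfold wd
  calc _ ≤ Real.exp (-rho q^2) * (4 * Real.exp (1/4 * rho q^2)) := by
        gcongr; exact sqrt_bd q
    _ = _ := by
        rw [show -(3/4 * rho q^2) = -rho q^2 + 1/4 * rho q^2 by ring, Real.exp_add]; ring

lemma rho_smul (t : ℝ) (ht : 0 ≤ t) (q : ℝ × ℝ) : rho (t • q) = t * rho q := by
  unfold rho
  simp only [Prod.smul_fst, Prod.smul_snd, smul_eq_mul]
  rw [show (t*q.1)^2 + (t*q.2)^2 = t^2 * (q.1^2+q.2^2) by ring, Real.sqrt_mul (sq_nonneg t),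
    Real.sqrt_sq ht]

lemma hf_one (a b : ℝ) : hf a b 1 = ((c0 * (√2 / Real.pi) : ℝ) : ℂ) * ∫ q, ph a b q * (wd q : ℂ) := by
  unfold hf Gk wd
  simp

lemma hf_zero (s : ℝ) (hs : 0 < s) : hf 0 0 s = 
    ((c0 * (√2 / Real.pi) * (∫ q, wd q) * s^(-(1/4):ℝ) : ℝ) : ℂ) := by
  have h1 : ∀ q, Gk 0 0 s q = (((s*√s)⁻¹ * (Real.exp (-(rho q^2/s)) * √(q.1 + rho q)) : ℝ) : ℂ) := by
    intro q; unfold Gk ph; simp; ring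
  unfold hf
  simp only [h1]
  rw [integral_complex_ofReal, integral_const_mul]
  have h2 := Measure.integral_comp_smul (volume : Measure (ℝ × ℝ))
    (fun q => Real.exp (-(rho q^2/s)) * √(q.1 + rho q)) (√s)
  have h3 : ∀ q : ℝ × ℝ, Real.exp (-(rho (√s • q)^2/s)) * √((√s • q).1 + rho (√s • q)) = 
      √(√s) * wd q := by
    intro q
    rw [rho_smul _ (Real.sqrt_nonneg _)]
    simp only [Prod.smul_fst, smul_eq_mul]
    rw [← mul_add, Real.sqrt_mul (Real.sqrt_nonneg _), mul_pow, Real.sq_sqrt hs.le,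
      mul_div_cancel_left₀ _ hs.ne']
    unfold wd; ring
  simp only [h3] at h2
  have hfr : Module.finrank ℝ (ℝ × ℝ) = 2 := by simp
  rw [integral_const_mul, hfr, Real.sq_sqrt hs.le, abs_of_pos (by positivity), smul_eq_mul] at h2
  have h4 : ∫ q : ℝ × ℝ, Real.exp (-(rho q^2/s)) * √(q.1 + rho q) = s * (√(√s) * ∫ q, wd q) := by
    rw [h2]; field_simp
  rw [h4, ← Complex.ofReal_mul]
  congr 1
  have h5 : s^(-(1/4):ℝ) = (s*√s)⁻¹ * s * √(√s) := by
    have e : √(√s) = s^(1/4:ℝ) := by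
      rw [Real.sqrt_eq_rpow, Real.sqrt_eq_rpow, ← Real.rpow_mul hs.le]; norm_num
    have e' : √s = s^(1/2:ℝ) := Real.sqrt_eq_rpow s
    have e3 : (s*√s)⁻¹ * s = s^(-(1/2):ℝ) := by
      rw [Real.rpow_neg hs.le, ← e']; field_simp
    rw [e3, e, ← Real.rpow_add hs]; norm_num
  rw [h5]; ring

lemma wd_total : ∫ q, wd q = Real.Gamma (1/4) / √2 := by
  have h := hf_lap 0 0 1 one_pos
  have h1 : ∫ s in Ioi (0:ℝ), (Real.exp (-(1*s)):ℂ) * hf 0 0 s = 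
      ((c0 * (√2 / Real.pi) * (∫ q, wd q) * Real.Gamma (3/4) : ℝ) : ℂ) := by
    rw [Real.Gamma_eq_integral (by norm_num), ← integral_const_mul, ← integral_complex_ofReal]
    refine setIntegral_congr_fun measurableSet_Ioi fun s hs => ?_
    rw [hf_zero s hs, ← Complex.ofReal_mul]
    congr 1
    norm_num
    ring
  rw [h1] at h
  have h2 : (c0 * (((2*√1:ℝ):ℂ) + Complex.I*((0:ℝ):ℂ))^(1/2:ℂ) / ((1+(0^2+0^2)/4:ℝ):ℂ)) = 
      ((c0 * √2 : ℝ) : ℂ) := by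
    rw [Real.sqrt_one, Real.sqrt_eq_rpow 2]
    push_cast
    rw [Complex.ofReal_cpow (by norm_num)]
    norm_num
  rw [h2] at h
  have h3 := Complex.ofReal_injective h
  have h4 := Real.Gamma_mul_Gamma_one_sub (1/4)
  rw [show Real.pi * (1/4) = Real.pi/4 by ring, Real.sin_pi_div_four] at h4
  norm_num at h4
  have hg : 0 < Real.Gamma (3/4) := Real.Gamma_pos_of_pos (by norm_num)
  have hc := c0_pos
  have hs : 0 < √2 := by positivity
  have hs2 : √2 * √2 = 2 := Real.mul_self_sqrt (by norm_num)
  have hpi := Real.pi_pos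
  have h5 : (∫ q, wd q) * Real.Gamma (3/4) = Real.pi := by
    field_simp at h3
    linarith
  have h6 : Real.Gamma (1/4) * Real.Gamma (3/4) = Real.pi * √2 := by
    rw [h4]; field_simp; linarith
  rw [eq_div_iff hs.ne']
  apply mul_right_cancel₀ hg.ne'
  rw [h6, mul_right_comm, h5]

lemma dens_eq (q : ℝ × ℝ) : slitDensity q = (√2 / Real.Gamma (1/4)) * wd q := by
  unfold slitDensity wd
  rw [rho_sq]; unfold rho; ring

lemma G14 : 0 < Real.Gamma (1/4) := Real.Gamma_pos_of_pos (by norm_num)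

lemma dens_int : Integrable slitDensity := by
  rw [funext dens_eq]; exact wd_int.const_mul _

lemma dens_nonneg (q : ℝ × ℝ) : 0 ≤ slitDensity q := by
  rw [dens_eq]; have := wd_nonneg q; have := G14; positivity

lemma dens_cont : Continuous slitDensity := by
  rw [funext dens_eq]; have := wd_cont; fun_prop

lemma dens_total : ∫ q, slitDensity q = 1 := by
  simp only [dens_eq]
  rw [integral_const_mul, wd_total]
  have := G14
  field_simp

lemma hf00 : 0 < (hf 0 0 1).re ∧ hf 0 0 1 = ((hf 0 0 1).re : ℂ) := by
  rw [hf_zero 1 one_pos, Complex.ofReal_re]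
  refine ⟨?_, rfl⟩
  rw [wd_total]
  have := c0_pos; have := G14; have := Real.pi_pos
  simp only [Real.one_rpow]
  positivity

lemma hf_ratio (a b : ℝ) : hf a b 1 / hf 0 0 1 = ∫ q, ph a b q * (slitDensity q : ℂ) := by
  have h : ∀ q, ph a b q * (slitDensity q : ℂ) = (√2 / Real.Gamma (1/4) : ℝ) * (ph a b q * (wd q : ℂ)) := by
    intro q; rw [dens_eq]; push_cast; ring
  simp only [h]
  rw [integral_const_mul, hf_zero 1 one_pos, hf_one, wd_total]
  have h1 := c0_pos; have h2 := G14; have h3 := Real.pi_pos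
  have h1' : (c0:ℂ) ≠ 0 := by exact_mod_cast h1.ne'
  have h2' : (Real.Gamma (1/4):ℂ) ≠ 0 := by exact_mod_cast h2.ne'
  have h3' : (Real.pi:ℂ) ≠ 0 := by exact_mod_cast h3.ne'
  have h4' : (√2:ℂ) ≠ 0 := by
    have : 0 < √2 := by positivity
    exact_mod_cast this.ne'
  simp only [Real.one_rpow]
  generalize Real.Gamma (1/4) = G at *
  push_cast
  field_simp

/-- the limit of characteristic functions -/
lemma char_lim (a b : ℝ) : Tendsto (fun N : ℕ => L N (ch (a/√N) (b/√N)) / (sv N : ℂ)) atTop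
    (𝓝 (∫ q, ph a b q * (slitDensity q : ℂ))) := by
  rw [← hf_ratio]
  have h1 := fix_lim a b _ _ (hf_HLap 0 0) (hf_HLap a b)
  have h2 := (Complex.continuous_ofReal.tendsto _).comp (xx_lim _ (hf_HLap 0 0))
  rw [← hf00.2] at h2
  have h0 : hf 0 0 1 ≠ 0 := by
    intro h; have := hf00.1; rw [h] at this; simp at this
  refine (h1.div h2 h0).congr' ?_
  filter_upwards [eventually_gt_atTop 0] with N hN
  change (√√(N:ℝ) * L N (ch (a/√N) (b/√N)) : ℂ) / ((√√(N:ℝ) * sv N : ℝ) : ℂ) = _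
  have : 0 < √√(N:ℝ) := by
    have : (0:ℝ) < N := by exact_mod_cast hN
    positivity
  rw [Complex.ofReal_mul, mul_div_mul_left]
  exact_mod_cast this.ne'

lemma sv_pos : ∀ᶠ N in atTop, 0 < sv N := by
  have h := (xx_lim _ (hf_HLap 0 0)).eventually (lt_mem_nhds hf00.1)
  filter_upwards [h] with N hN
  unfold xx at hN
  exact pos_of_mul_pos_right hN (Real.sqrt_nonneg _)

end SlitPf


namespace SlitPf
open Set Topology Filter MeasureTheory

lemma sum_Wk_c (n : ℕ) (f : ℤ × ℤ → ℂ) : ∑ w ∈ Wk n, f (w (Fin.last n)) = 4^n * L n f := by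
  have h1 := sum_Wk n (fun p => (f p).re)
  have h2 := sum_Wk n (fun p => (f p).im)
  have h3 : L n f = ((L n (fun p => (f p).re) : ℝ) : ℂ) + Complex.I * ((L n (fun p => (f p).im) : ℝ) : ℂ) := by
    rw [← L_ofReal, ← L_ofReal, ← L_mul, ← L_add']
    congr 1; ext p
    rw [mul_comm, Complex.re_add_im]
  have h4 : ∑ w ∈ Wk n, f (w (Fin.last n)) = ((∑ w ∈ Wk n, (f (w (Fin.last n))).re : ℝ) : ℂ) +
      Complex.I * ((∑ w ∈ Wk n, (f (w (Fin.last n))).im : ℝ) : ℂ) := by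
    push_cast
    rw [Finset.mul_sum, ← Finset.sum_add_distrib]
    refine Finset.sum_congr rfl fun w _ => ?_
    rw [mul_comm, Complex.re_add_im]
  rw [h4, h1, h2, h3]; push_cast; ring

/-- rescaled endpoint -/
noncomputable def zpt (n : ℕ) (p : ℤ × ℤ) : ℂ := ⟨(p.1:ℝ) / √n, (p.2:ℝ) / √n⟩

/-- law of the rescaled endpoint -/
noncomputable def mun (n : ℕ) : Measure ℂ :=
  ∑ w ∈ Wk n, ENNReal.ofReal ((4^n * sv n)⁻¹) • Measure.dirac (zpt n (w (Fin.last n)))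

lemma mun_integral {E : Type*} [NormedAddCommGroup E] [NormedSpace ℝ E] [CompleteSpace E]
    (n : ℕ) (f : ℂ → E) :
    ∫ z, f z ∂(mun n) = (4^n * sv n)⁻¹ • ∑ w ∈ Wk n, f (zpt n (w (Fin.last n))) := by
  unfold mun
  rw [integral_finsetSum_measure]
  · rw [Finset.smul_sum]
    refine Finset.sum_congr rfl fun w _ => ?_
    rw [integral_smul_measure, integral_dirac, ENNReal.toReal_ofReal]
    have := sv_nonneg n
    positivity
  · intro w _
    exact (integrable_dirac (by simp)).smul_measure ENNReal.ofReal_ne_top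

lemma mun_prob (n : ℕ) (h : 0 < sv n) : IsProbabilityMeasure (mun n) := by
  constructor
  unfold mun
  have h1 := sum_Wk n (fun _ => 1)
  simp only [Finset.sum_const, nsmul_eq_mul, mul_one] at h1
  simp only [Measure.coe_finsetSum, Finset.sum_apply, Measure.smul_apply, measure_univ,
    smul_eq_mul, mul_one, Finset.sum_const, nsmul_eq_mul]
  rw [← ENNReal.ofReal_natCast, ← ENNReal.ofReal_mul (by positivity), h1]
  have : L n (fun _ => (1:ℝ)) = sv n := rfl
  rw [this, mul_inv_cancel₀ (by positivity), ENNReal.ofReal_one]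

/-- the limit law on the plane -/
noncomputable def lam : Measure (ℝ × ℝ) := volume.withDensity (fun q => ENNReal.ofReal (slitDensity q))

lemma lam_prob : IsProbabilityMeasure lam := by
  constructor
  unfold lam
  rw [withDensity_apply _ MeasurableSet.univ, setLIntegral_univ,
    ← ofReal_integral_eq_lintegral_ofReal dens_int (Eventually.of_forall dens_nonneg), dens_total,
    ENNReal.ofReal_one]

lemma lam_integral {E : Type*} [NormedAddCommGroup E] [NormedSpace ℝ E] [CompleteSpace E]
    (f : ℝ × ℝ → E) : ∫ q, f q ∂lam = ∫ q, slitDensity q • f q := by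
  unfold lam
  rw [integral_withDensity_eq_integral_toReal_smul (by have := dens_cont; fun_prop) (by simp)]
  simp only [ENNReal.toReal_ofReal (dens_nonneg _)]

/-- the limit law on the complex plane -/
noncomputable def mulaw : Measure ℂ := lam.map Complex.measurableEquivRealProd.symm

lemma mulaw_prob : IsProbabilityMeasure mulaw := by
  have := lam_prob
  exact Measure.isProbabilityMeasure_map Complex.measurableEquivRealProd.symm.measurable.aemeasurable

lemma mulaw_integral {E : Type*} [NormedAddCommGroup E] [NormedSpace ℝ E] [CompleteSpace E]
    (f : ℂ → E) : ∫ z, f z ∂mulaw = ∫ q : ℝ × ℝ, slitDensity q • f ⟨q.1, q.2⟩ := by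
  unfold mulaw
  rw [integral_map_equiv, lam_integral]
  rfl

/-- bundling -/
noncomputable def mkPM (m : Measure ℂ) (h : IsProbabilityMeasure m) : ProbabilityMeasure ℂ := ⟨m, h⟩

lemma coe_mkPM (m : Measure ℂ) (h : IsProbabilityMeasure m) : (mkPM m h : Measure ℂ) = m := rfl

/-- the laws as probability measures -/
noncomputable def PM (n : ℕ) : ProbabilityMeasure ℂ :=
  open Classical in if h : 0 < sv n then mkPM (mun n) (mun_prob n h) else mkPM mulaw mulaw_prob

lemma PM_eq (n : ℕ) (h : 0 < sv n) : (PM n : Measure ℂ) = mun n := by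
  unfold PM; rw [dif_pos h]; rfl

lemma PM_tendsto : Tendsto PM atTop (𝓝 (mkPM mulaw mulaw_prob)) := by
  apply ProbabilityMeasure.tendsto_of_tendsto_charFun
  intro t
  have h := char_lim t.re t.im
  have e : charFun ((mkPM mulaw mulaw_prob) : Measure ℂ) t = 
      ∫ q, ph t.re t.im q * (slitDensity q : ℂ) := by
    change charFun mulaw t = _
    rw [charFun_apply, mulaw_integral]
    congr 1; ext q
    rw [Complex.real_smul, mul_comm]
    congr 1
    unfold ph
    congr 1
    rw [Complex.inner]
    simp
    ring
  rw [e]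
  refine h.congr' ?_
  filter_upwards [sv_pos] with n hn
  rw [PM_eq n hn, charFun_apply, mun_integral]
  have e2 : ∀ p : ℤ × ℤ, Complex.exp ((inner ℝ (zpt n p) t : ℝ) * Complex.I) = 
      ch (t.re/√n) (t.im/√n) p := by
    intro p
    unfold ch zpt
    congr 1
    rw [Complex.inner]
    simp
    ring
  simp only [e2]
  rw [sum_Wk_c n (ch (t.re/√n) (t.im/√n)), Complex.real_smul]
  have : (sv n : ℂ) ≠ 0 := by exact_mod_cast hn.ne'
  push_cast
  field_simp

end SlitPf

/-- if `(Xₙ,Yₙ)` is the endpoint of a uniformly random `n`-step walk on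
the slit plane, then `(Xₙ/√n, Yₙ/√n)` converges in distribution to the law on `ℝ²`
with density `f(x,y) = (√2/Γ(1/4)) e^{−(x²+y²)} √(x+√(x²+y²))` w.r.t. Lebesgue
measure: tested against any bounded continuous function `g`, the expectation
`𝔼 g(Xₙ/√n, Yₙ/√n) = (∑_{(i,j)} a_{i,j}(n) g(i/√n, j/√n)) / a(n)` converges to
`∫ g·f`. -/
theorem slit_plane_limit_law (g : BoundedContinuousFunction (ℝ × ℝ) ℝ) :
    Tendsto (fun n : ℕ =>
        (∑' p : ℤ × ℤ, (slitCount sqSteps p.1 p.2 n : ℝ)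
            * g ((p.1 : ℝ) / Real.sqrt n, (p.2 : ℝ) / Real.sqrt n))
          / (slitTotal sqSteps n : ℝ))
      atTop (nhds (∫ q : ℝ × ℝ, g q * slitDensity q)) := by
  have h := (MeasureTheory.ProbabilityMeasure.tendsto_iff_forall_integral_tendsto.mp
    SlitPf.PM_tendsto) (g.compContinuous ⟨fun z : ℂ => (z.re, z.im), by fun_prop⟩)
  have e : ∫ ω, (g.compContinuous ⟨fun z : ℂ => (z.re, z.im), by fun_prop⟩) ω
      ∂((SlitPf.mkPM SlitPf.mulaw SlitPf.mulaw_prob) :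
        MeasureTheory.Measure ℂ) = ∫ q : ℝ × ℝ, g q * slitDensity q := by
    change ∫ z : ℂ, g (z.re, z.im) ∂SlitPf.mulaw = _
    rw [SlitPf.mulaw_integral]
    congr 1; ext q
    rw [smul_eq_mul, mul_comm]
  rw [e] at h
  refine h.congr' ?_
  filter_upwards [SlitPf.sv_pos] with n hn
  rw [SlitPf.PM_eq n hn, SlitPf.slitTotal_eq, SlitPf.tsum_slitCount n
    (fun p => g ((p.1 : ℝ) / Real.sqrt n, (p.2 : ℝ) / Real.sqrt n)), ← SlitPf.sum_Wk,
    SlitPf.mun_integral, smul_eq_mul, div_eq_inv_mul]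
  rfl
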